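/- arXiv:1802.04214 — 7 statements merged into one kernel-verified Lean document; each statement's English description precedes it below -/
import Mathlib

section
/- Every minimal 1-saturating set in PG(2,2) has exactly 4 points; that is, if S is a 1-saturating set of nonzero vectors of (ZMod 2)^3 such that for every s ∈ S the set S \ {s} is not 1-saturating, then S has cardinality 4. -/
/-- Points of PG(n-1,2) are the nonzero vectors of `Fin n → ZMod 2`.
A set `S` of nonzero vectors is 1-saturating if every nonzero vector `x ∉ S`
is the sum of two distinct elements of `S`. -/
def Saturating {n : ℕ} (S : Set (Fin n → ZMod 2)) : Prop :=
  (∀ s ∈ S, s ≠ 0) ∧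
    ∀ x : Fin n → ZMod 2, x ≠ 0 → x ∉ S →
      ∃ a ∈ S, ∃ b ∈ S, a ≠ b ∧ x = a + b

/-- A minimal 1-saturating set: 1-saturating, and removing any point destroys saturation. -/
def MinSat {n : ℕ} (S : Set (Fin n → ZMod 2)) : Prop :=
  Saturating S ∧ ∀ s ∈ S, ¬ Saturating (S \ {s})

/-- A cap: a set of nonzero vectors no three pairwise distinct elements of which sum to zero. -/
def IsCap {n : ℕ} (S : Set (Fin n → ZMod 2)) : Prop :=
  (∀ s ∈ S, s ≠ 0) ∧
    ∀ a ∈ S, ∀ b ∈ S, ∀ c ∈ S, a ≠ b → a ≠ c → b ≠ c → a + b + c ≠ 0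

/-- A complete cap: a cap that is 1-saturating. -/
def CompleteCap {n : ℕ} (S : Set (Fin n → ZMod 2)) : Prop :=
  IsCap S ∧ Saturating S

/-- Projective equivalence: some element of GL(n, ZMod 2) maps `S` onto `T`. -/
def ProjEquiv {n : ℕ} (S T : Set (Fin n → ZMod 2)) : Prop :=
  ∃ g : Matrix.GeneralLinearGroup (Fin n) (ZMod 2),
    (fun x => Matrix.mulVec (g : Matrix (Fin n) (Fin n) (ZMod 2)) x) '' S = T

/-!
Over `ZMod 2`, adjoining the origin to a set `S` of points turns "`x ∈ S` or `x = a + b`" into the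
single condition "`x` is a sum of two distinct elements of `insert 0 S`". Counting pairs, a
saturating set in PG(n,2) satisfies `2 ^ (n + 1) - 1 ≤ (#S + 1).choose 2`. Conversely, the lines
through a point `x ∉ S` pair off the other points, `a` with `x - a`, so by pigeonhole any `2 ^ n`
points are saturating, and a minimal saturating set has at most `2 ^ n` points. For `n = 2` the two
bounds force `#S = 4`.
-/

open scoped Pointwise

/-- The restricted sumset of `A`, whose elements are the sums of two distinct elements of `A`. It
expresses saturation without separating the points of `S` from the points they generate; see
`saturating_iff`. -/
def restrictedSumset {M : Type*} [Add M] (A : Set M) : Set M :=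
  {x | ∃ a ∈ A, ∃ b ∈ A, a ≠ b ∧ x = a + b}

theorem ncard_restrictedSumset_le {M : Type*} [AddCommMonoid M] {A : Set M} (hA : A.Finite) :
    (restrictedSumset A).ncard ≤ A.ncard.choose 2 := by
  classical
  lift A to Finset M using hA
  let pairSums := (A.powersetCard 2).image fun P ↦ ∑ y ∈ P, y
  have h_subset : restrictedSumset (A : Set M) ⊆ pairSums := by
    rintro _ ⟨a, ha, b, hb, hab, rfl⟩
    exact Finset.mem_image.2 ⟨{a, b},
      Finset.mem_powersetCard.2 ⟨Finset.insert_subset ha (Finset.singleton_subset_iff.2 hb),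
        Finset.card_pair hab⟩, Finset.sum_pair hab⟩
  calc
    (restrictedSumset (A : Set M)).ncard ≤ pairSums.card :=
      (Set.ncard_le_ncard h_subset).trans_eq (Set.ncard_coe_finset _)
    _ ≤ (A.powersetCard 2).card := Finset.card_image_le
    _ = (A : Set M).ncard.choose 2 := by rw [Finset.card_powersetCard, Set.ncard_coe_finset]

theorem add_eq_univ_of_card_lt_ncard_add_ncard {G : Type*} [AddGroup G] [Finite G] {A B : Set G}
    (h : Nat.card G < A.ncard + B.ncard) : A + B = Set.univ := by
  refine Set.eq_univ_of_forall fun x ↦ ?_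
  by_contra hx
  have h_disjoint : Disjoint A ((x - ·) '' B) := by
    rw [Set.disjoint_right]
    rintro _ ⟨b, hb, rfl⟩ ha
    exact hx ⟨x - b, ha, b, hb, sub_add_cancel x b⟩
  have h_union := Set.ncard_le_card (A ∪ (x - ·) '' B)
  rw [Set.ncard_union_eq h_disjoint, Set.ncard_image_of_injective B sub_right_injective] at h_union
  exact h.not_ge h_union

theorem compl_zero_subset_restrictedSumset {G : Type*} [AddCommGroup G] [Module (ZMod 2) G]
    [Finite G] {A : Set G} (h : Nat.card G < 2 * A.ncard) : {0}ᶜ ⊆ restrictedSumset A := by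
  intro x hx
  obtain ⟨a, ha, b, hb, rfl⟩ : x ∈ A + A := by
    simp only [add_eq_univ_of_card_lt_ncard_add_ncard (two_mul A.ncard ▸ h), Set.mem_univ]
  refine ⟨a, ha, b, hb, ?_, rfl⟩
  rintro rfl
  exact hx (ZModModule.add_self a)

section Saturating

variable {n : ℕ}

theorem saturating_iff {S : Set (Fin n → ZMod 2)} :
    Saturating S ↔ 0 ∉ S ∧ {0}ᶜ ⊆ restrictedSumset (insert 0 S) := by
  constructor
  · rintro ⟨h_ne, h_sum⟩
    refine ⟨fun h0 ↦ h_ne 0 h0 rfl, fun x hx ↦ ?_⟩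
    by_cases hxS : x ∈ S
    · exact ⟨0, .inl rfl, x, .inr hxS, Ne.symm hx, (zero_add x).symm⟩
    · obtain ⟨a, ha, b, hb, hab⟩ := h_sum x hx hxS
      exact ⟨a, .inr ha, b, .inr hb, hab⟩
  · rintro ⟨h0, h_sum⟩
    refine ⟨fun s hs ↦ ne_of_mem_of_not_mem hs h0, fun x hx hxS ↦ ?_⟩
    obtain ⟨a, rfl | ha, b, rfl | hb, hab, rfl⟩ := h_sum hx
    · exact absurd rfl hab
    · exact absurd hb (by rwa [zero_add] at hxS)
    · exact absurd ha (by rwa [add_zero] at hxS)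
    · exact ⟨a, ha, b, hb, hab, rfl⟩

theorem natCard_fin_fun_zmod_two : Nat.card (Fin n → ZMod 2) = 2 ^ n := by
  rw [Nat.card_fun, Nat.card_zmod, Nat.card_fin]

theorem Saturating.two_pow_le_choose {S : Set (Fin n → ZMod 2)} (hS : Saturating S) :
    2 ^ n ≤ (S.ncard + 1).choose 2 + 1 := by
  obtain ⟨h0, h_sum⟩ := saturating_iff.1 hS
  calc
    2 ^ n = ({0}ᶜ : Set (Fin n → ZMod 2)).ncard + 1 := by
      rw [← natCard_fin_fun_zmod_two, ← Set.ncard_add_ncard_compl {0}, Set.ncard_singleton,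
        add_comm]
    _ ≤ (restrictedSumset (insert 0 S)).ncard + 1 :=
      Nat.add_le_add_right (Set.ncard_le_ncard h_sum) 1
    _ ≤ (insert 0 S).ncard.choose 2 + 1 := by grw [ncard_restrictedSumset_le (Set.toFinite _)]
    _ = (S.ncard + 1).choose 2 + 1 := by rw [Set.ncard_insert_of_notMem h0]

theorem saturating_of_two_pow_le_two_mul_ncard {S : Set (Fin n → ZMod 2)} (h0 : 0 ∉ S)
    (h_ncard : 2 ^ n ≤ 2 * S.ncard) : Saturating S := by
  refine saturating_iff.2 ⟨h0, compl_zero_subset_restrictedSumset ?_⟩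
  rw [natCard_fin_fun_zmod_two, Set.ncard_insert_of_notMem h0]
  lia

theorem MinSat.ncard_le_two_pow {S : Set (Fin (n + 1) → ZMod 2)} (hS : MinSat S) :
    S.ncard ≤ 2 ^ n := by
  by_contra! h_ncard
  obtain ⟨s, hs⟩ : S.Nonempty := Set.nonempty_of_ncard_ne_zero (Nat.ne_zero_of_lt h_ncard)
  have h0 : 0 ∉ S \ {s} := fun h ↦ (saturating_iff.1 hS.1).1 h.1
  refine hS.2 s hs (saturating_of_two_pow_le_two_mul_ncard h0 ?_)
  rw [Set.ncard_sdiff_singleton_of_mem hs, pow_succ']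
  lia

end Saturating

/-- Every minimal 1-saturating set in PG(2,2) has exactly 4 points. -/
theorem minSat_PG2_card_eq_four (S : Set (Fin 3 → ZMod 2)) (hS : MinSat S) :
    S.ncard = 4 := by
  refine le_antisymm hS.ncard_le_two_pow ?_
  by_contra! h_lt
  have h_choose : (S.ncard + 1).choose 2 ≤ Nat.choose 4 2 := Nat.choose_le_choose 2 h_lt
  have h_count : 2 ^ 3 ≤ Nat.choose 4 2 + 1 :=
    hS.1.two_pow_le_choose.trans (Nat.add_le_add_right h_choose 1)
  exact absurd h_count (by decide)
end

section
/- Up to projective equivalence there are exactly two minimal 1-saturating sets in PG(2,2): the number of orbits of the action of GL(3, ZMod 2) on the collection of minimal 1-saturating sets of nonzero vectors of (ZMod 2)^3 is exactly 2. -/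
/-!
A 1-saturating set `S` of size `k` writes every vector as a sum of at most two of its points, so
`2 ^ n ≤ 1 + k + k.choose 2`; in the Fano plane this forces `k ≥ 4`. As `S` also spans, it contains
a basis `b` together with a further point, which is the sum of two or three of the basis vectors.
Those four points are already 1-saturating: every nonzero vector is a sum of at most three basis
vectors, and the sum of all three is either the further point or that point plus the remaining
basis vector. Hence the minimal 1-saturating sets are exactly these four-point sets. The number of
summands of the further point determines the set up to projective equivalence, and the two values
differ because only the sum of three basis vectors yields a cap.
-/

open Finset Module

section SubsetSums

variable {R M ι : Type*} [AddCommMonoid M] {b : ι → M}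

theorem sum_finset_injective_of_linearIndependent [Semiring R] [Nontrivial R] [Module R M]
    (hb : LinearIndependent R b) : Function.Injective fun t : Finset ι => ∑ i ∈ t, b i := by
  classical
  intro s t hst
  have hindicator : ∑ i ∈ s, Finsupp.single i (1 : R) = ∑ i ∈ t, Finsupp.single i 1 :=
    hb (by simpa only [map_sum, Finsupp.linearCombination_single, one_smul] using hst)
  ext i
  have hcoeff : (if i ∈ s then (1 : R) else 0) = if i ∈ t then 1 else 0 := by
    simpa [Finsupp.single_apply] using DFunLike.congr_fun hindicator i
  by_cases hs : i ∈ s <;> by_cases ht : i ∈ t <;> simp_all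

theorem sum_ne_zero_of_linearIndependent [Semiring R] [Nontrivial R] [Module R M]
    (hb : LinearIndependent R b) {t : Finset ι} (ht : t.Nonempty) : ∑ i ∈ t, b i ≠ 0 := fun h =>
  ht.ne_empty (sum_finset_injective_of_linearIndependent hb (by simpa using h))

theorem sum_notMem_range_of_linearIndependent [Semiring R] [Nontrivial R] [Module R M]
    (hb : LinearIndependent R b) {t : Finset ι} (ht : 2 ≤ #t) : ∑ i ∈ t, b i ∉ Set.range b := by
  rintro ⟨j, hj⟩
  have hjt : {j} = t := sum_finset_injective_of_linearIndependent hb (by simpa using hj)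
  simp [← hjt] at ht

theorem two_le_card_of_sum_ne_zero_of_notMem_range {t : Finset ι} (h0 : ∑ i ∈ t, b i ≠ 0)
    (hrange : ∑ i ∈ t, b i ∉ Set.range b) : 2 ≤ #t := by
  by_contra! hlt
  obtain h | h : #t = 0 ∨ #t = 1 := by lia
  · exact h0 (by simp [card_eq_zero.mp h])
  · obtain ⟨i, rfl⟩ := card_eq_one.mp h
    exact hrange ⟨i, (sum_singleton b i).symm⟩

theorem exists_finset_eq_sum [Module (ZMod 2) M] (b : Basis ι (ZMod 2) M) (x : M) :
    ∃ t : Finset ι, x = ∑ i ∈ t, b i := by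
  refine ⟨(b.repr x).support, ?_⟩
  conv_lhs => rw [← b.linearCombination_repr x, Finsupp.linearCombination_apply, Finsupp.sum]
  refine sum_congr rfl fun i hi => ?_
  have hone : b.repr x i = 1 := Fin.eq_one_of_ne_zero _ (Finsupp.mem_support_iff.mp hi)
  rw [hone, one_smul]

end SubsetSums

section SaturatingSets

variable {n : ℕ} {S T : Set (Fin n → ZMod 2)}

theorem Saturating.mono (hT : Saturating T) (hTS : T ⊆ S) (hS : ∀ s ∈ S, s ≠ 0) :
    Saturating S := by
  refine ⟨hS, fun x hx hxS => ?_⟩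
  obtain ⟨a, ha, b, hb, hab⟩ := hT.2 x hx (mt (@hTS x) hxS)
  exact ⟨a, hTS ha, b, hTS hb, hab⟩

theorem MinSat.eq_of_subset (hS : MinSat S) (hT : Saturating T) (hTS : T ⊆ S) : T = S := by
  refine hTS.antisymm fun s hs => ?_
  by_contra hsT
  exact hS.2 s hs <| hT.mono (Set.subset_sdiff_singleton hTS hsT) fun t ht => hS.1.1 t ht.1

theorem Saturating.span_eq_top (hS : Saturating S) : Submodule.span (ZMod 2) S = ⊤ := by
  refine Submodule.eq_top_iff'.mpr fun x => ?_
  by_cases hx : x = 0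
  · exact hx ▸ Submodule.zero_mem _
  by_cases hxS : x ∈ S
  · exact Submodule.subset_span hxS
  obtain ⟨a, ha, b, hb, -, rfl⟩ := hS.2 x hx hxS
  exact add_mem (Submodule.subset_span ha) (Submodule.subset_span hb)

theorem Saturating.exists_subset_card_le_two_eq_sum (hS : Saturating S) (x : Fin n → ZMod 2) :
    ∃ u : Finset (Fin n → ZMod 2), ↑u ⊆ S ∧ #u ≤ 2 ∧ x = ∑ y ∈ u, y := by
  by_cases hx : x = 0
  · exact ⟨∅, by simp [hx]⟩
  by_cases hxS : x ∈ S
  · exact ⟨{x}, by simp [hxS]⟩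
  obtain ⟨a, ha, b, hb, hab, rfl⟩ := hS.2 x hx hxS
  exact ⟨{a, b}, by simp [Set.insert_subset_iff, ha, hb], card_le_two,
    (sum_pair (f := id) hab).symm⟩

/-- The sphere-covering bound for the linear code of covering radius at most 2 whose parity-check
matrix has the points of `S` as columns. -/
theorem Saturating.two_pow_le_sum_choose (hS : Saturating S) :
    2 ^ n ≤ ∑ k ∈ range 3, S.ncard.choose k := by
  classical
  let F := S.toFinite.toFinset
  let sums := (range 3).biUnion fun k => (F.powersetCard k).image fun u => ∑ y ∈ u, y
  have hcover : (univ : Finset (Fin n → ZMod 2)) ⊆ sums := by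
    intro x _
    obtain ⟨u, huS, hu, rfl⟩ := hS.exists_subset_card_le_two_eq_sum x
    refine mem_biUnion.mpr ⟨#u, mem_range.mpr (by lia), mem_image_of_mem _ ?_⟩
    exact mem_powersetCard.mpr ⟨fun y hy => S.toFinite.mem_toFinset.mpr (huS hy), rfl⟩
  calc 2 ^ n = #(univ : Finset (Fin n → ZMod 2)) := by simp
    _ ≤ #sums := card_le_card hcover
    _ ≤ ∑ k ∈ range 3, #((F.powersetCard k).image fun u => ∑ y ∈ u, y) := card_biUnion_le
    _ ≤ ∑ k ∈ range 3, #(F.powersetCard k) := sum_le_sum fun _ _ => card_image_le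
    _ = ∑ k ∈ range 3, S.ncard.choose k := by
      simp only [card_powersetCard, F, ← Set.ncard_eq_toFinset_card]

theorem Saturating.four_le_ncard {S : Set (Fin 3 → ZMod 2)} (hS : Saturating S) :
    4 ≤ S.ncard := by
  by_contra! hlt
  have hbound : 2 ^ 3 ≤ ∑ k ∈ range 3, (3 : ℕ).choose k :=
    hS.two_pow_le_sum_choose.trans <| sum_le_sum fun k _ => Nat.choose_mono k (by lia)
  exact absurd hbound (by decide)

theorem Saturating.minSat_of_ncard_eq_four {S : Set (Fin 3 → ZMod 2)} (hS : Saturating S)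
    (hcard : S.ncard = 4) : MinSat S := by
  refine ⟨hS, fun s hs hdiff => ?_⟩
  have hfour : 4 ≤ (S \ {s}).ncard := hdiff.four_le_ncard
  rw [Set.ncard_sdiff_singleton_of_mem hs] at hfour
  lia

end SaturatingSets

section Caps

variable {n : ℕ} {S : Set (Fin n → ZMod 2)}

theorem IsCap.insert (hS : IsCap S) {d : Fin n → ZMod 2} (hd : d ≠ 0)
    (hdS : ∀ a ∈ S, ∀ b ∈ S, a ≠ b → d ≠ a + b) : IsCap (insert d S) := by
  have hsum : ∀ a ∈ S, ∀ b ∈ S, a ≠ b → d + a + b ≠ 0 := by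
    intro a ha b hb hab h
    refine hdS a ha b hb hab ?_
    rw [← ZModModule.neg_eq_self (a + b)]
    exact eq_neg_of_add_eq_zero_left (by rwa [← add_assoc])
  refine ⟨Set.forall_mem_insert.mpr ⟨hd, hS.1⟩, ?_⟩
  rintro a (rfl | ha) b (rfl | hb) c (rfl | hc) hab hac hbc
  · exact absurd rfl hab
  · exact absurd rfl hab
  · exact absurd rfl hac
  · exact hsum b hb c hc hbc
  · exact absurd rfl hbc
  · rw [add_comm a]
    exact hsum a ha c hc hac
  · rw [add_comm, ← add_assoc]
    exact hsum a ha b hb hab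
  · exact hS.2 a ha b hb c hc hab hac hbc

theorem isCap_range_of_linearIndependent {ι : Type*} {b : ι → Fin n → ZMod 2}
    (hb : LinearIndependent (ZMod 2) b) : IsCap (Set.range b) := by
  classical
  refine ⟨Set.forall_mem_range.mpr hb.ne_zero, ?_⟩
  rintro _ ⟨i, rfl⟩ _ ⟨j, rfl⟩ _ ⟨k, rfl⟩ hij hik hjk hsum
  have hempty : {i, j, k} = (∅ : Finset ι) := by
    apply sum_finset_injective_of_linearIndependent hb
    simpa [sum_insert, ne_of_apply_ne b hij, ne_of_apply_ne b hik, ne_of_apply_ne b hjk,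
      add_assoc] using hsum
  exact insert_ne_empty _ _ hempty

theorem IsCap.of_image {m : ℕ} {f : (Fin n → ZMod 2) →ₗ[ZMod 2] (Fin m → ZMod 2)}
    (hf : Function.Injective f) (h : IsCap (f '' S)) : IsCap S := by
  refine ⟨fun s hs hs0 => h.1 _ (Set.mem_image_of_mem f hs) (by simp [hs0]), ?_⟩
  intro a ha b hb c hc hab hac hbc hsum
  refine h.2 _ (Set.mem_image_of_mem f ha) _ (Set.mem_image_of_mem f hb) _
    (Set.mem_image_of_mem f hc) (hf.ne hab) (hf.ne hac) (hf.ne hbc) ?_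
  rw [← map_add, ← map_add, hsum, map_zero]

end Caps

section ProjectiveEquivalence

variable {n : ℕ} {S T : Set (Fin n → ZMod 2)}

theorem projEquiv_iff_exists_linearEquiv :
    ProjEquiv S T ↔ ∃ e : (Fin n → ZMod 2) ≃ₗ[ZMod 2] (Fin n → ZMod 2), e '' S = T := by
  constructor
  · rintro ⟨g, rfl⟩
    exact ⟨(Matrix.GeneralLinearGroup.toLin g).toLinearEquiv, rfl⟩
  · rintro ⟨e, rfl⟩
    refine ⟨Matrix.GeneralLinearGroup.toLin.symm (.ofLinearEquiv e), Set.image_congr fun x _ => ?_⟩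
    exact LinearMap.toMatrix'_mulVec e.toLinearMap x

theorem ProjEquiv.isCap_of_isCap (h : ProjEquiv S T) (hT : IsCap T) : IsCap S := by
  obtain ⟨e, rfl⟩ := projEquiv_iff_exists_linearEquiv.mp h
  exact IsCap.of_image (f := e.toLinearMap) e.injective hT

end ProjectiveEquivalence

/-- The points of the family `b` together with the sum of those indexed by `t`. For a basis `b` of
the Fano plane this is a line and a point off it if `#t = 2`, and the four points of a projective
frame if `#t = 3`. -/
def insertSum {M ι : Type*} [AddCommMonoid M] (b : ι → M) (t : Finset ι) : Set M :=
  insert (∑ i ∈ t, b i) (Set.range b)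

section InsertSum

variable {n : ℕ} {ι : Type*}

theorem ncard_insertSum {R M : Type*} [Semiring R] [Nontrivial R] [AddCommMonoid M]
    [Module R M] [Finite ι] {b : ι → M} (hb : LinearIndependent R b) {t : Finset ι} (ht : 2 ≤ #t) :
    (insertSum b t).ncard = Nat.card ι + 1 := by
  rw [insertSum, Set.ncard_insert_of_notMem (sum_notMem_range_of_linearIndependent hb ht),
    Set.ncard_range_of_injective hb.injective]

theorem not_isCap_insertSum {b : ι → Fin n → ZMod 2} (hb : Function.Injective b)
    {t : Finset ι} (ht : #t = 2) : ¬ IsCap (insertSum b t) := by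
  classical
  obtain ⟨i, j, hij, rfl⟩ := card_eq_two.mp ht
  intro hcap
  have hmem (k : ι) : b k ∈ insertSum b {i, j} := Or.inr ⟨k, rfl⟩
  have hsum : b i + b j ∈ insertSum b {i, j} := Or.inl (sum_pair hij).symm
  refine hcap.2 _ (hmem i) _ (hmem j) _ hsum (hb.ne hij) ?_ ?_ (ZModModule.add_self _)
  · simpa using hcap.1 _ (hmem j)
  · simpa using hcap.1 _ (hmem i)

theorem isCap_insertSum {b : ι → Fin n → ZMod 2} (hb : LinearIndependent (ZMod 2) b)
    {t : Finset ι} (ht : 3 ≤ #t) : IsCap (insertSum b t) := by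
  classical
  refine (isCap_range_of_linearIndependent hb).insert ?_ ?_
  · exact sum_ne_zero_of_linearIndependent hb (card_pos.mp (by lia))
  · rintro _ ⟨i, rfl⟩ _ ⟨j, rfl⟩ hij hsum
    have htij : t = {i, j} := by
      apply sum_finset_injective_of_linearIndependent hb
      simpa only [sum_pair (ne_of_apply_ne b hij)] using hsum
    have := card_pair (ne_of_apply_ne b hij)
    lia

theorem projEquiv_insertSum (b b' : Basis ι (ZMod 2) (Fin n → ZMod 2))
    {t t' : Finset ι} (h : #t = #t') : ProjEquiv (insertSum b t) (insertSum b' t') := by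
  obtain ⟨σ, rfl⟩ := Equiv.Perm.exists_map_finset_eq t t' h
  refine projEquiv_iff_exists_linearEquiv.mpr ⟨b.equiv b' σ, ?_⟩
  have hrange : b.equiv b' σ '' Set.range b = Set.range b' := by
    rw [← Set.range_comp, ← σ.surjective.range_comp b']
    exact congrArg Set.range (funext fun i => b.equiv_apply i b' σ)
  simp [insertSum, Set.image_insert_eq, hrange]

theorem exists_insertSum_subset {S : Set (Fin n → ZMod 2)}
    (hspan : Submodule.span (ZMod 2) S = ⊤) (h0 : 0 ∉ S) (hcard : n < S.ncard) :
    ∃ (b : Basis (Fin n) (ZMod 2) (Fin n → ZMod 2)) (t : Finset (Fin n)),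
      2 ≤ #t ∧ insertSum b t ⊆ S := by
  let b₀ := Basis.ofSpan hspan.ge
  let b := b₀.reindex (b₀.indexEquiv (Pi.basisFun (ZMod 2) (Fin n)))
  have hbS : Set.range b ⊆ S := by
    rw [Basis.range_reindex]
    exact Basis.ofSpan_subset hspan.ge
  obtain ⟨d, hdS, hdb⟩ : ∃ d ∈ S, d ∉ Set.range b := by
    refine Set.exists_mem_notMem_of_ncard_lt_ncard ?_ (Set.finite_range b)
    rwa [Set.ncard_range_of_injective b.injective, Nat.card_fin]
  obtain ⟨t, rfl⟩ := exists_finset_eq_sum b d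
  have hd0 : ∑ i ∈ t, b i ≠ 0 := ne_of_mem_of_not_mem hdS h0
  exact ⟨b, t, two_le_card_of_sum_ne_zero_of_notMem_range hd0 hdb, Set.insert_subset hdS hbS⟩

end InsertSum

section FanoPlane

theorem saturating_insertSum (b : Basis (Fin 3) (ZMod 2) (Fin 3 → ZMod 2)) {t : Finset (Fin 3)}
    (ht : 2 ≤ #t) : Saturating (insertSum b t) := by
  have hmem (i : Fin 3) : b i ∈ insertSum b t := Or.inr ⟨i, rfl⟩
  have hsum : ∑ i ∈ t, b i ∈ insertSum b t := Or.inl rfl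
  have hlin := b.linearIndependent
  refine ⟨?_, fun x hx hxS => ?_⟩
  · rintro s (rfl | ⟨i, rfl⟩)
    · exact sum_ne_zero_of_linearIndependent hlin (card_pos.mp (by lia))
    · exact b.ne_zero i
  obtain ⟨u, rfl⟩ := exists_finset_eq_sum b x
  have hu : 2 ≤ #u :=
    two_le_card_of_sum_ne_zero_of_notMem_range hx fun h => hxS (Or.inr h)
  obtain hu2 | hu3 : #u = 2 ∨ #u = 3 := by
    have := card_finset_fin_le u
    lia
  · obtain ⟨i, j, hij, rfl⟩ := card_eq_two.mp hu2
    exact ⟨b i, hmem i, b j, hmem j, b.injective.ne hij, sum_pair hij⟩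
  · obtain rfl : u = univ := card_eq_iff_eq_univ u |>.mp hu3
    have htu : t ≠ univ := fun h => hxS (h ▸ hsum)
    have htc : #tᶜ = 1 := by
      have hlt : #t < 3 := by simpa using t.card_lt_iff_ne_univ.mpr htu
      rw [card_compl, Fintype.card_fin]
      lia
    obtain ⟨j, hj⟩ := card_eq_one.mp htc
    refine ⟨∑ i ∈ t, b i, hsum, b j, hmem j, fun h => ?_, ?_⟩
    · exact sum_notMem_range_of_linearIndependent hlin ht ⟨j, h.symm⟩
    · rw [← sum_add_sum_compl t, hj, sum_singleton]

theorem minSat_iff_exists_eq_insertSum {S : Set (Fin 3 → ZMod 2)} :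
    MinSat S ↔ ∃ (b : Basis (Fin 3) (ZMod 2) (Fin 3 → ZMod 2)) (t : Finset (Fin 3)),
      2 ≤ #t ∧ S = insertSum b t := by
  constructor
  · intro hS
    obtain ⟨b, t, ht, hbt⟩ :=
      exists_insertSum_subset hS.1.span_eq_top (fun h => hS.1.1 0 h rfl) hS.1.four_le_ncard
    exact ⟨b, t, ht, (hS.eq_of_subset (saturating_insertSum b ht) hbt).symm⟩
  · rintro ⟨b, t, ht, rfl⟩
    refine (saturating_insertSum b ht).minSat_of_ncard_eq_four ?_
    rw [ncard_insertSum b.linearIndependent ht, Nat.card_fin]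

end FanoPlane

/-- Up to projective equivalence there are exactly two minimal 1-saturating sets in PG(2,2). -/
theorem minSat_PG2_two_orbits :
    ∃ A B : Set (Fin 3 → ZMod 2), MinSat A ∧ MinSat B ∧ ¬ ProjEquiv A B ∧
      ∀ S : Set (Fin 3 → ZMod 2), MinSat S → ProjEquiv S A ∨ ProjEquiv S B := by
  let b := Pi.basisFun (ZMod 2) (Fin 3)
  have hA : #({0, 1} : Finset (Fin 3)) = 2 := rfl
  have hB : #(univ : Finset (Fin 3)) = 3 := rfl
  refine ⟨insertSum b {0, 1}, insertSum b univ, ?_, ?_, ?_, ?_⟩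
  · exact minSat_iff_exists_eq_insertSum.mpr ⟨b, _, hA.ge, rfl⟩
  · exact minSat_iff_exists_eq_insertSum.mpr ⟨b, _, by lia, rfl⟩
  · intro h
    exact not_isCap_insertSum b.injective hA
      (h.isCap_of_isCap (isCap_insertSum b.linearIndependent hB.ge))
  · intro S hS
    obtain ⟨b', t, ht, rfl⟩ := minSat_iff_exists_eq_insertSum.mp hS
    obtain ht2 | ht3 : #t = 2 ∨ #t = 3 := by
      have := card_finset_fin_le t
      lia
    · exact .inl (projEquiv_insertSum b' b (ht2.trans hA.symm))
    · exact .inr (projEquiv_insertSum b' b (ht3.trans hB.symm))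
end

section
/- The smallest complete cap in PG(3,2) has size 5: there exists a complete cap of 5 nonzero vectors in (ZMod 2)^4, and every complete cap in (ZMod 2)^4 has at least 5 points. -/
/-! A set `S` of points is 1-saturating exactly when every vector is the sum of at most two
elements of `S`, so there are at most `1 + k + k.choose 2` vectors when `S` has `k` points; for
`k ≤ 4` this is at most `11 < 2 ^ 4`. Conversely, the five points `e₁, e₂, e₃, e₄, 1` of a frame
have a single nonempty subset with sum zero, the whole frame, so no three of them add up to zero;
and each vector is the sum of a set of frame points and also of the complementary set, one of
which has at most two elements. In coding terms, the frame points are the columns of a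
parity check matrix of the perfect binary repetition code of length five. -/

open Finset

section Covering

variable {M : Type*} [AddCommMonoid M]

/-- Every element of `M` is a sum of at most `r` distinct elements of `S`. When `M` is
a vector space over `ZMod 2`, this says that the binary code with the elements of `S` as the
columns of a parity check matrix has covering radius at most `r`. -/
def CoversWithin (S : Finset M) (r : ℕ) : Prop :=
  ∀ x : M, ∃ T ⊆ S, #T ≤ r ∧ ∑ v ∈ T, v = x

theorem CoversWithin.card_le_sum_choose [Fintype M] {S : Finset M} {r : ℕ}
    (hS : CoversWithin S r) : Fintype.card M ≤ ∑ i ∈ range (r + 1), (#S).choose i := by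
  classical
  let subsets := (range (r + 1)).biUnion fun i => powersetCard i S
  have hsums : (univ : Finset M) ⊆ subsets.image fun T => ∑ v ∈ T, v := by
    intro x _
    obtain ⟨T, hTS, hTr, hx⟩ := hS x
    refine mem_image.2 ⟨T, mem_biUnion.2 ⟨#T, ?_, mem_powersetCard.2 ⟨hTS, rfl⟩⟩, hx⟩
    exact mem_range_succ_iff.2 hTr
  calc Fintype.card M ≤ #(subsets.image fun T => ∑ v ∈ T, v) := card_le_card hsums
    _ ≤ #subsets := card_image_le
    _ ≤ ∑ i ∈ range (r + 1), #(powersetCard i S) := card_biUnion_le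
    _ = ∑ i ∈ range (r + 1), (#S).choose i := by simp only [card_powersetCard]

end Covering

variable {n : ℕ}

theorem Saturating.coversWithin_two {S : Finset (Fin n → ZMod 2)}
    (hS : Saturating (S : Set (Fin n → ZMod 2))) : CoversWithin S 2 := by
  intro x
  by_cases hx : x = 0
  · exact ⟨∅, empty_subset S, by simp, by simp [hx]⟩
  by_cases hxS : x ∈ S
  · exact ⟨{x}, singleton_subset_iff.2 hxS, by simp, sum_singleton _ _⟩
  obtain ⟨a, ha, b, hb, hab, rfl⟩ := hS.2 x hx hxS
  exact ⟨{a, b}, insert_subset ha (singleton_subset_iff.2 hb), card_le_two, sum_pair hab⟩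

theorem CoversWithin.saturating {S : Finset (Fin n → ZMod 2)} (hS : CoversWithin S 2)
    (h0 : 0 ∉ S) : Saturating (S : Set (Fin n → ZMod 2)) := by
  refine ⟨fun s hs => ne_of_mem_of_not_mem hs h0, fun x hx hxS => ?_⟩
  obtain ⟨T, hTS, hT, rfl⟩ := hS x
  interval_cases hcard : #T
  · simp [card_eq_zero.1 hcard] at hx
  · obtain ⟨a, rfl⟩ := card_eq_one.1 hcard
    rw [sum_singleton] at hxS
    exact absurd (singleton_subset_iff.1 hTS) hxS
  · obtain ⟨a, b, hab, rfl⟩ := card_eq_two.1 hcard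
    exact ⟨a, hTS (by simp), b, hTS (by simp), hab, sum_pair hab⟩

theorem Saturating.two_pow_le {S : Set (Fin n → ZMod 2)} (hS : Saturating S) :
    2 ^ n ≤ 1 + S.ncard + S.ncard.choose 2 := by
  obtain ⟨F, rfl⟩ := S.toFinite.exists_finset_coe
  simpa [sum_range_succ] using hS.coversWithin_two.card_le_sum_choose

/-- The set of standard basis vectors `eᵢ` with `i ∈ s`. -/
def unitVectors (s : Finset (Fin n)) : Finset (Fin n → ZMod 2) :=
  s.image fun i => Pi.single i 1

theorem single_one_injective {ι R : Type*} [DecidableEq ι] [Ring R] [Nontrivial R] :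
    Function.Injective fun i : ι => (Pi.single i 1 : ι → R) :=
  (Pi.linearIndependent_single_one ι R).injective

theorem card_unitVectors (s : Finset (Fin n)) : #(unitVectors s) = #s :=
  card_image_of_injective s single_one_injective

theorem sum_unitVectors (s : Finset (Fin n)) :
    ∑ v ∈ unitVectors s, v = fun i => if i ∈ s then 1 else 0 := by
  rw [unitVectors, sum_image single_one_injective.injOn]
  funext i
  rw [Finset.sum_apply, sum_pi_single]

theorem one_notMem_unitVectors (hn : n ≠ 1) (s : Finset (Fin n)) : 1 ∉ unitVectors s := by
  intro h
  obtain ⟨i, -, hi⟩ := mem_image.1 h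
  have : Nontrivial (Fin n) := Fin.nontrivial_iff_two_le.2 (by have := i.pos; omega)
  obtain ⟨j, hj⟩ := exists_ne i
  simpa [hj] using congrFun hi j

/-- The standard frame of PG(n-1,2): the basis vectors `eᵢ` together with the all-ones vector. -/
def standardFrame (n : ℕ) : Finset (Fin n → ZMod 2) :=
  insert 1 (unitVectors univ)

theorem card_standardFrame (hn : n ≠ 1) : #(standardFrame n) = n + 1 := by
  rw [standardFrame, card_insert_of_notMem (one_notMem_unitVectors hn univ), card_unitVectors,
    card_fin]

theorem zero_notMem_standardFrame (hn : n ≠ 0) : 0 ∉ standardFrame n := by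
  have : NeZero n := ⟨hn⟩
  simp [standardFrame, unitVectors]

theorem eq_standardFrame_of_sum_eq_zero {T : Finset (Fin n → ZMod 2)} (hT : T ⊆ standardFrame n)
    (hne : T.Nonempty) (hsum : ∑ v ∈ T, v = 0) : T = standardFrame n := by
  obtain ⟨s, -, hs⟩ := subset_image_iff.1 (subset_insert_iff.1 hT)
  replace hs : T.erase 1 = unitVectors s := hs.symm
  by_cases h1 : 1 ∈ T
  · have hall : ∑ v ∈ unitVectors s, v = 1 := by
      rw [← add_sum_erase T _ h1, hs] at hsum
      simpa [ZModModule.neg_eq_self] using (neg_eq_of_add_eq_zero_right hsum).symm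
    rw [sum_unitVectors] at hall
    have hs_univ : s = univ := eq_univ_of_forall fun i => by
      simpa using congrFun hall i
    rw [← insert_erase h1, hs, hs_univ, standardFrame]
  · rw [erase_eq_of_notMem h1] at hs
    rw [hs, sum_unitVectors] at hsum
    obtain rfl : s = ∅ := eq_empty_of_forall_notMem fun i => by
      simpa using congrFun hsum i
    simp [hs, unitVectors] at hne

theorem isCap_standardFrame (hn : 3 ≤ n) :
    IsCap (standardFrame n : Set (Fin n → ZMod 2)) := by
  refine ⟨fun s hs => ne_of_mem_of_not_mem hs (zero_notMem_standardFrame (by omega)), ?_⟩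
  intro a ha b hb c hc hab hac hbc hsum
  have hframe : {a, b, c} = standardFrame n := by
    refine eq_standardFrame_of_sum_eq_zero ?_ (insert_nonempty _ _) ?_
    · exact insert_subset ha (insert_subset hb (singleton_subset_iff.2 hc))
    · rw [sum_insert (by simp [hab, hac]), sum_pair hbc, ← add_assoc, hsum]
  have hcard := card_standardFrame (n := n) (by omega)
  rw [← hframe, card_eq_three.2 ⟨a, b, c, hab, hac, hbc, rfl⟩] at hcard
  omega

theorem sum_standardFrame (hn : n ≠ 1) : ∑ v ∈ standardFrame n, v = 0 := by
  have hunits : ∑ v ∈ unitVectors (univ : Finset (Fin n)), v = 1 := by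
    rw [sum_unitVectors]
    funext i
    simp
  rw [standardFrame, sum_insert (one_notMem_unitVectors hn univ), hunits, ZModModule.add_self]

theorem coversWithin_standardFrame (hn : n ≠ 1) :
    CoversWithin (standardFrame n) ((n + 1) / 2) := by
  intro x
  let T : Finset (Fin n → ZMod 2) := unitVectors {i | x i ≠ 0}
  have hT : T ⊆ standardFrame n :=
    (image_subset_image (subset_univ _)).trans (subset_insert _ _)
  have hsum : ∑ v ∈ T, v = x := by
    rw [sum_unitVectors]
    funext i
    by_cases hi : x i = 0
    · simp [hi]
    · have hi_one : x i = 1 := Fin.eq_one_of_ne_zero (x i) hi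
      simp [hi_one]
  by_cases hcard : #T ≤ (n + 1) / 2
  · exact ⟨T, hT, hcard, hsum⟩
  refine ⟨standardFrame n \ T, sdiff_subset, ?_, ?_⟩
  · rw [card_sdiff_of_subset hT, card_standardFrame hn]
    omega
  · have hsplit : ∑ v ∈ standardFrame n \ T, v + x = 0 := by
      rw [← hsum, sum_sdiff hT, sum_standardFrame hn]
    rw [eq_neg_of_add_eq_zero_left hsplit, ZModModule.neg_eq_self]

theorem completeCap_standardFrame_four :
    CompleteCap (standardFrame 4 : Set (Fin 4 → ZMod 2)) :=
  ⟨isCap_standardFrame (by norm_num), (coversWithin_standardFrame (by norm_num)).saturating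
    (zero_notMem_standardFrame (by norm_num))⟩

theorem completeCap_PG3_min_size_general :
    (∃ S : Set (Fin 4 → ZMod 2), CompleteCap S ∧ S.ncard = 5) ∧
      ∀ S : Set (Fin 4 → ZMod 2), Saturating S → 5 ≤ S.ncard := by
  refine ⟨⟨standardFrame 4, completeCap_standardFrame_four, ?_⟩, fun S hS => ?_⟩
  · rw [Set.ncard_coe_finset, card_standardFrame (by norm_num)]
  · by_contra! hlt
    have hchoose : S.ncard.choose 2 ≤ 6 :=
      Nat.choose_le_choose 2 (Nat.le_of_lt_succ hlt)
    have hcover : 2 ^ 4 ≤ 1 + S.ncard + S.ncard.choose 2 := hS.two_pow_le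
    omega

/-- The smallest complete cap in PG(3,2) has size 5. -/
theorem completeCap_PG3_min_size :
    (∃ S : Set (Fin 4 → ZMod 2), CompleteCap S ∧ S.ncard = 5) ∧
      ∀ S : Set (Fin 4 → ZMod 2), CompleteCap S → 5 ≤ S.ncard :=
  ⟨completeCap_PG3_min_size_general.1, fun S hS => completeCap_PG3_min_size_general.2 S hS.2⟩
end

section
/- The smallest complete cap in PG(4,2) has size 9: there exists a complete cap of 9 nonzero vectors in (ZMod 2)^5, and every complete cap in (ZMod 2)^5 has at least 9 points. -/
/-!
Lower bound: the evaluations `s ↦ u ⬝ᵥ s` on a set `S` of at most eight points form a code of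
length `|S|` indexed by `2 ^ 5` functionals, too many for the balls of radius one around them to be
disjoint, so some nonzero `u` is `1` at only `t ≤ 2` points of `S`. If `S` is 1-saturating, each of
the `16` points `x` with `u ⬝ᵥ x = 1` is one of these `t` points plus either `0` or one of the
`|S| - t` others, and `t * (9 - t) < 16`.

Existence: puncture an affine hyperplane of `PG(3,2)` at a point `p` and add the two points other
than `p` of a line of `PG(4,2)` which meets that `PG(3,2)` in `p` only.
-/

open scoped Finset

section SpherePacking

theorem exists_ne_zero_map_eq_neg_add {A G : Type*} [AddGroup A] [AddGroup G] [Fintype A]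
    [Fintype G] (f : A →+ G) (E : Finset G) (hE : Fintype.card G < Fintype.card A * #E) :
    ∃ a ≠ 0, ∃ e ∈ E, ∃ e' ∈ E, f a = -e + e' := by
  have hcard : #(Finset.univ : Finset G) < #((Finset.univ : Finset A) ×ˢ E) := by
    rwa [Finset.card_product, Finset.card_univ, Finset.card_univ]
  obtain ⟨⟨a, e⟩, he, ⟨a', e'⟩, he', hne, hcollide⟩ :=
    Finset.exists_ne_map_eq_of_card_lt_of_maps_to (f := fun q : A × G => q.2 + f q.1) hcard
      fun _ _ => Finset.mem_univ _
  replace hcollide : e + f a = e' + f a' := hcollide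
  refine ⟨a - a', fun h => hne ?_, e, (Finset.mem_product.1 he).2, e',
    (Finset.mem_product.1 he').2, ?_⟩
  · obtain rfl : a = a' := sub_eq_zero.1 h
    rw [add_right_cancel hcollide]
  · rw [map_sub, sub_eq_iff_eq_add, add_assoc, ← hcollide, neg_add_cancel_left]

variable {ι G : Type*} [Fintype ι] [DecidableEq G]

theorem hammingNorm_single_le_one [DecidableEq ι] [Zero G] (i : ι) (g : G) :
    hammingNorm (Pi.single i g : ι → G) ≤ 1 := by
  refine (Finset.card_le_card (t := {i}) fun j hj => ?_).trans_eq (Finset.card_singleton i)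
  by_contra hji
  rw [Finset.mem_singleton] at hji
  exact (Finset.mem_filter.1 hj).2 (Pi.single_eq_of_ne (M := fun _ => G) hji g)

theorem eq_zero_or_exists_eq_single_of_hammingNorm_le_one [DecidableEq ι] [Zero G] {x : ι → G}
    (hx : hammingNorm x ≤ 1) : x = 0 ∨ ∃ i, ∃ g ≠ 0, x = Pi.single i g := by
  refine or_iff_not_imp_left.2 fun hx0 => ?_
  obtain ⟨i, hi⟩ := Function.ne_iff.1 hx0
  refine ⟨i, x i, hi, funext fun j => ?_⟩
  by_cases hj : x j = 0
  · rw [hj, Pi.single_apply]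
    split_ifs with hji
    · exact hj ▸ congrArg x hji
    · rfl
  · obtain rfl : j = i := Finset.card_le_one.1 hx j (by simpa using hj) i (by simpa using hi)
    rw [Pi.single_eq_same]

theorem card_hammingNorm_le_one [DecidableEq ι] [Fintype G] [Zero G] :
    #{x : ι → G | hammingNorm x ≤ 1} = Fintype.card ι * (Fintype.card G - 1) + 1 := by
  let single : ι × {g : G // g ≠ 0} → ι → G := fun q => Pi.single q.1 q.2
  have single_injective : Function.Injective single := by
    rintro ⟨i, g, hg⟩ ⟨j, h, hh⟩ hij
    obtain rfl : i = j := by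
      by_contra hne
      have := congrFun hij i
      simp only [single, Pi.single_eq_same, Pi.single_eq_of_ne hne] at this
      exact hg this
    have := Pi.single_injective i hij
    simp_all
  have zero_notMem : (0 : ι → G) ∉ Finset.univ.image single := by
    simp [single]
  have ball_eq : ({x : ι → G | hammingNorm x ≤ 1} : Finset _) =
      insert 0 (Finset.univ.image single) := by
    ext x
    simp only [Finset.mem_filter_univ, Finset.mem_insert, Finset.mem_image, Finset.mem_univ,
      true_and]
    constructor
    · intro hx
      refine (eq_zero_or_exists_eq_single_of_hammingNorm_le_one hx).imp_right ?_
      rintro ⟨i, g, hg, rfl⟩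
      exact ⟨(i, ⟨g, hg⟩), rfl⟩
    · rintro (rfl | ⟨q, rfl⟩)
      · rw [hammingNorm_zero]
        exact zero_le_one
      · exact hammingNorm_single_le_one q.1 (q.2 : G)
  rw [ball_eq, Finset.card_insert_of_notMem zero_notMem,
    Finset.card_image_of_injective _ single_injective, Finset.card_univ, Fintype.card_prod,
    Fintype.card_subtype_compl, Fintype.card_subtype_eq]

theorem exists_ne_zero_hammingNorm_map_le_two {A : Type*} [AddGroup A] [Fintype A] [AddGroup G]
    [Fintype G] (f : A →+ (ι → G))
    (h : Fintype.card G ^ Fintype.card ι <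
      Fintype.card A * (Fintype.card ι * (Fintype.card G - 1) + 1)) :
    ∃ a ≠ 0, hammingNorm (f a) ≤ 2 := by
  classical
  obtain ⟨a, ha, e, he, e', he', hf⟩ :=
    exists_ne_zero_map_eq_neg_add f {x | hammingNorm x ≤ 1} <| by
      rwa [Fintype.card_fun, card_hammingNorm_le_one]
  have norm_e : hammingNorm e ≤ 1 := (Finset.mem_filter.1 he).2
  have norm_e' : hammingNorm e' ≤ 1 := (Finset.mem_filter.1 he').2
  refine ⟨a, ha, ?_⟩
  calc hammingNorm (f a) = hammingDist e e' := by rw [hf, hammingDist_eq_hammingNorm]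
    _ ≤ hammingDist e 0 + hammingDist 0 e' := hammingDist_triangle e 0 e'
    _ = hammingNorm e + hammingNorm e' := by
      rw [hammingDist_zero_right, hammingDist_zero_left]
    _ ≤ 2 := by omega

theorem exists_ne_zero_card_dotProduct_ne_zero_le_two {K κ : Type*} [Fintype κ] [CommRing K]
    [Fintype K] [DecidableEq K] (S : Finset (κ → K))
    (h : Fintype.card K ^ #S <
      Fintype.card K ^ Fintype.card κ * (#S * (Fintype.card K - 1) + 1)) :
    ∃ u : κ → K, u ≠ 0 ∧ #{s ∈ S | u ⬝ᵥ s ≠ 0} ≤ 2 := by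
  classical
  let evaluation := (Matrix.of ((↑) : S → κ → K)).mulVecLin.toAddMonoidHom
  obtain ⟨u, hu, hnorm⟩ := exists_ne_zero_hammingNorm_map_le_two evaluation <| by
    rwa [Fintype.card_coe, Fintype.card_fun]
  refine ⟨u, hu, ?_⟩
  calc #{s ∈ S | u ⬝ᵥ s ≠ 0}
      = #{s : S | u ⬝ᵥ (s : κ → K) ≠ 0} := by
        rw [Finset.univ_eq_attach, Finset.filter_attach (fun s => u ⬝ᵥ s ≠ 0), Finset.card_map,
          Finset.card_attach]
    _ = hammingNorm (evaluation u) := by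
        simp only [dotProduct_comm u]
        rfl
    _ ≤ 2 := hnorm

end SpherePacking

section Counting

open scoped Pointwise

theorem card_dotProduct_eq_mul_card {K κ : Type*} [Fintype κ] [DecidableEq κ] [Field K] [Fintype K]
    [DecidableEq K] {u : κ → K} (hu : u ≠ 0) (c : K) :
    #{x : κ → K | u ⬝ᵥ x = c} * Fintype.card K = Fintype.card K ^ Fintype.card κ := by
  have surjective : Function.Surjective (dotProductBilin K K u) :=
    LinearMap.surjective fun h => hu <| dotProduct_eq_zero u fun x => LinearMap.congr_fun h x
  have fiber_card (d : K) : #{x : κ → K | u ⬝ᵥ x = d} = #{x : κ → K | u ⬝ᵥ x = c} :=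
    AddMonoidHom.card_fiber_eq_of_mem_range (dotProductBilin K K u) (surjective d) (surjective c)
  calc #{x : κ → K | u ⬝ᵥ x = c} * Fintype.card K
      = ∑ d : K, #{x : κ → K | u ⬝ᵥ x = d} := by
        simp only [fiber_card, Finset.sum_const, Finset.card_univ, smul_eq_mul, mul_comm]
    _ = Fintype.card (κ → K) :=
        (Finset.card_eq_sum_card_fiberwise fun x _ => Finset.mem_coe.2 (Finset.mem_univ _)).symm
    _ = Fintype.card K ^ Fintype.card κ := Fintype.card_fun

variable {n : ℕ}

theorem Saturating.filter_dotProduct_eq_one_subset_add {S : Finset (Fin n → ZMod 2)}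
    (hS : Saturating (S : Set (Fin n → ZMod 2))) (u : Fin n → ZMod 2) :
    ({x : Fin n → ZMod 2 | u ⬝ᵥ x = 1} : Finset _) ⊆
      {s ∈ S | u ⬝ᵥ s = 1} + insert 0 {s ∈ S | u ⬝ᵥ s = 0} := by
  intro x hx
  replace hx : u ⬝ᵥ x = 1 := (Finset.mem_filter.1 hx).2
  by_cases hxS : x ∈ S
  · exact Finset.mem_add.2
      ⟨x, Finset.mem_filter.2 ⟨hxS, hx⟩, 0, Finset.mem_insert_self _ _, add_zero x⟩
  have hx0 : x ≠ 0 := by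
    rintro rfl
    exact zero_ne_one ((dotProduct_zero u).symm.trans hx)
  obtain ⟨a, ha, b, hb, -, rfl⟩ := hS.2 x hx0 hxS
  have one_splits : ∀ p q : ZMod 2, p + q = 1 → p = 1 ∧ q = 0 ∨ p = 0 ∧ q = 1 := by decide
  rcases one_splits _ _ ((dotProduct_add u a b).symm.trans hx) with ⟨hua, hub⟩ | ⟨hua, hub⟩
  · exact Finset.add_mem_add (Finset.mem_filter.2 ⟨ha, hua⟩)
      (Finset.mem_insert_of_mem (Finset.mem_filter.2 ⟨hb, hub⟩))
  · rw [add_comm a b]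
    exact Finset.add_mem_add (Finset.mem_filter.2 ⟨hb, hub⟩)
      (Finset.mem_insert_of_mem (Finset.mem_filter.2 ⟨ha, hua⟩))

theorem Saturating.two_pow_le_card_mul {S : Finset (Fin (n + 1) → ZMod 2)}
    (hS : Saturating (S : Set (Fin (n + 1) → ZMod 2))) {u : Fin (n + 1) → ZMod 2} (hu : u ≠ 0) :
    2 ^ n ≤ #{s ∈ S | u ⬝ᵥ s = 1} * (#{s ∈ S | u ⬝ᵥ s = 0} + 1) :=
  calc 2 ^ n = #{x : Fin (n + 1) → ZMod 2 | u ⬝ᵥ x = 1} := by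
        have := card_dotProduct_eq_mul_card hu 1
        rw [ZMod.card, Fintype.card_fin, pow_succ] at this
        omega
    _ ≤ #({s ∈ S | u ⬝ᵥ s = 1} + insert 0 {s ∈ S | u ⬝ᵥ s = 0}) :=
        Finset.card_le_card (hS.filter_dotProduct_eq_one_subset_add u)
    _ ≤ _ := Finset.card_add_le.trans (Nat.mul_le_mul_left _ (Finset.card_insert_le _ _))

theorem Saturating.exists_le_two_two_pow_le {S : Finset (Fin (n + 1) → ZMod 2)}
    (hS : Saturating (S : Set (Fin (n + 1) → ZMod 2)))
    (hcard : 2 ^ #S < 2 ^ (n + 1) * (#S + 1)) :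
    ∃ t ≤ 2, 2 ^ n ≤ t * (#S - t + 1) := by
  obtain ⟨u, hu, hlight⟩ := exists_ne_zero_card_dotProduct_ne_zero_le_two S <| by
    simpa using hcard
  have ne_zero_iff : ∀ p : ZMod 2, p ≠ 0 ↔ p = 1 := by decide
  have hsplit := Finset.card_filter_add_card_filter_not (s := S) fun s => u ⬝ᵥ s = 0
  have hpow := hS.two_pow_le_card_mul hu
  simp only [← ne_zero_iff] at hpow
  refine ⟨_, hlight, ?_⟩
  rwa [← hsplit, Nat.add_sub_cancel]

theorem Saturating.nine_le_card {S : Finset (Fin 5 → ZMod 2)}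
    (hS : Saturating (S : Set (Fin 5 → ZMod 2))) : 9 ≤ #S := by
  by_contra! hlt
  obtain ⟨t, ht, hpow⟩ := hS.exists_le_two_two_pow_le (by interval_cases #S <;> norm_num)
  interval_cases t <;> omega

end Counting

section Construction

open Matrix

theorem zmod_two_eq_zero_or_eq_one : ∀ a : ZMod 2, a = 0 ∨ a = 1 := by
  decide

/-- The set of the points `(1, 0, z)` with `z ≠ 0` together with `(0, 1, 0)` and `(1, 1, 0)`: the
affine part `(1, 0, *)` of a hyperplane, punctured at `p = (1, 0, 0)`, and the two further points of
a line through `p` outside that hyperplane. -/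
def puncturedAffineCap (k : ℕ) : Set (Fin (k + 2) → ZMod 2) :=
  (fun z => vecCons 1 (vecCons 0 z)) '' {0}ᶜ ∪ {vecCons 0 (vecCons 1 0), vecCons 1 (vecCons 1 0)}

theorem forall_vecCons_vecCons {α : Type*} {k : ℕ} {p : (Fin (k + 2) → α) → Prop} :
    (∀ x, p x) ↔ ∀ a b z, p (vecCons a (vecCons b z)) := by
  simp only [Fin.forall_fin_succ_pi, vecCons]

variable {k : ℕ}

theorem vecCons_vecCons_mem_puncturedAffineCap {a b : ZMod 2} {z : Fin k → ZMod 2} :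
    vecCons a (vecCons b z) ∈ puncturedAffineCap k ↔ a = 1 ∧ b = 0 ∧ z ≠ 0 ∨ b = 1 ∧ z = 0 := by
  rcases zmod_two_eq_zero_or_eq_one a with rfl | rfl <;>
    simp [puncturedAffineCap, vecCons, Fin.cons_inj, eq_comm, and_comm, or_comm]

theorem isCap_puncturedAffineCap : IsCap (puncturedAffineCap k) := by
  constructor
  · refine forall_vecCons_vecCons.2 fun a b z hs => ?_
    rw [vecCons_vecCons_mem_puncturedAffineCap] at hs
    rw [ne_eq, cons_eq_zero_iff, cons_eq_zero_iff]
    rintro ⟨rfl, rfl, rfl⟩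
    simp at hs
  · -- The first two coordinates of a point form a nonzero vector of the plane. Three of these sum
    -- to zero only if all are different, and then the remaining coordinates sum to `z ≠ 0`.
    have one_add_one_add_one : (1 + 1 + 1 : ZMod 2) ≠ 0 := by decide
    rintro _ (⟨x, hx, rfl⟩ | rfl | rfl) _ (⟨y, hy, rfl⟩ | rfl | rfl) _ (⟨z, hz, rfl⟩ | rfl | rfl)
      <;> simp_all

theorem saturating_puncturedAffineCap (hk : 2 ≤ k) : Saturating (puncturedAffineCap k) := by
  refine ⟨isCap_puncturedAffineCap.1, forall_vecCons_vecCons.2 fun a b z hx hxS => ?_⟩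
  have mem_affine {w : Fin k → ZMod 2} (hw : w ≠ 0) :
      vecCons 1 (vecCons 0 w) ∈ puncturedAffineCap k :=
    vecCons_vecCons_mem_puncturedAffineCap.2 (.inl ⟨rfl, rfl, hw⟩)
  have mem_line (c : ZMod 2) : vecCons c (vecCons 1 0) ∈ puncturedAffineCap k :=
    vecCons_vecCons_mem_puncturedAffineCap.2 (.inr ⟨rfl, rfl⟩)
  rw [vecCons_vecCons_mem_puncturedAffineCap] at hxS
  rcases zmod_two_eq_zero_or_eq_one b with rfl | rfl
  · rcases zmod_two_eq_zero_or_eq_one a with rfl | rfl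
    · have hz : z ≠ 0 := by
        rintro rfl
        simp at hx
      have three_le_card : 3 ≤ ENat.card (Fin k → ZMod 2) := by
        rw [ENat.card_eq_coe_fintype_card, Fintype.card_fun, ZMod.card, Fintype.card_fin]
        exact_mod_cast (by norm_num : 3 ≤ 2 ^ 2).trans (Nat.pow_le_pow_right two_pos hk)
      obtain ⟨w, hw0, hwz⟩ := ENat.exists_ne_ne_of_three_le three_le_card 0 z
      have w_add_w : w + w = 0 := funext fun i => CharTwo.add_self_eq_zero (w i)
      refine ⟨_, mem_affine hw0, _, mem_affine (sub_ne_zero.2 hwz.symm), ?_, ?_⟩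
      · simpa [eq_sub_iff_add_eq, w_add_w] using hz.symm
      · simp [CharTwo.add_self_eq_zero]
    · obtain rfl : z = 0 := by simpa using hxS
      exact ⟨_, mem_line 0, _, mem_line 1, by simp, by simp [CharTwo.add_self_eq_zero]⟩
  · have hz : z ≠ 0 := by simpa using hxS
    refine ⟨_, mem_line (a + 1), _, mem_affine hz, by simp, ?_⟩
    simp [add_assoc, CharTwo.add_self_eq_zero]

theorem completeCap_puncturedAffineCap (hk : 2 ≤ k) : CompleteCap (puncturedAffineCap k) :=
  ⟨isCap_puncturedAffineCap, saturating_puncturedAffineCap hk⟩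

theorem ncard_puncturedAffineCap : (puncturedAffineCap k).ncard = 2 ^ k + 1 := by
  have injective : Function.Injective fun z : Fin k → ZMod 2 =>
      (vecCons 1 (vecCons 0 z) : Fin (k + 2) → ZMod 2) := fun y z h => by
    simpa using h
  have ncard_affine : ((fun z : Fin k → ZMod 2 =>
      (vecCons 1 (vecCons 0 z) : Fin (k + 2) → ZMod 2)) '' {0}ᶜ).ncard = 2 ^ k - 1 := by
    rw [Set.ncard_image_of_injective _ injective, Set.ncard_compl, Set.ncard_singleton,
      Nat.card_fun, Nat.card_zmod, Nat.card_fin]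
  have ncard_line : ({vecCons 0 (vecCons 1 0), vecCons 1 (vecCons 1 0)} :
      Set (Fin (k + 2) → ZMod 2)).ncard = 2 := Set.ncard_pair (by simp)
  rw [puncturedAffineCap, Set.ncard_union_eq, ncard_affine, ncard_line]
  · have := Nat.one_le_two_pow (n := k)
    omega
  · rw [Set.disjoint_left]
    rintro _ ⟨z, -, rfl⟩
    simp

end Construction

theorem completeCap_PG4_min_size_general :
    (∃ S : Set (Fin 5 → ZMod 2), CompleteCap S ∧ S.ncard = 9) ∧
      ∀ S : Set (Fin 5 → ZMod 2), Saturating S → 9 ≤ S.ncard := by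
  refine ⟨⟨puncturedAffineCap 3, completeCap_puncturedAffineCap (by norm_num),
    ncard_puncturedAffineCap⟩, fun S hS => ?_⟩
  lift S to Finset (Fin 5 → ZMod 2) using S.toFinite
  rw [Set.ncard_coe_finset]
  exact hS.nine_le_card

/-- The smallest complete cap in PG(4,2) has size 9. -/
theorem completeCap_PG4_min_size :
    (∃ S : Set (Fin 5 → ZMod 2), CompleteCap S ∧ S.ncard = 9) ∧
      ∀ S : Set (Fin 5 → ZMod 2), CompleteCap S → 9 ≤ S.ncard :=
  ⟨completeCap_PG4_min_size_general.1,
    fun S hS => completeCap_PG4_min_size_general.2 S hS.2⟩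
end

section
/- The smallest complete cap in PG(5,2) has size 13, and 13 is also the smallest size of a 1-saturating set in PG(5,2): there exists a complete cap of 13 nonzero vectors in (ZMod 2)^6, and every 1-saturating set of nonzero vectors of (ZMod 2)^6 has at least 13 points. -/
/-!
Adding the zero vector to a `1`-saturating set of `PG(5,2)` gives a set `T` with `T + T` everything,
so it suffices to rule out such a `T` with `13` elements. On average a hyperplane separates fewer
than `40` of the `78` pairs of points of `T`, while it must separate at least `32` of them since
its complement consists of sums of separated pairs. Hence some hyperplane splits `T` into `4 + 9`
points. Projecting from a point off this hyperplane gives sets `V` of `4` and `U` of at most `9`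
points in a space of rank `5` such that `U + V` is everything and `U + U` contains the complement
of the span `W` of the differences of `V`.

If `W` has rank `2`, then it has `8` cosets. If `W` has rank `3`, then counting on its `4` cosets
shows that each of them contains two points of `U` differing by the sum of `V`, so that `U` has
image of at most `5` points modulo this sum. In both cases `U` or its image has at most one point
more than there are cosets of a subspace of rank `2`, and `natCard_quotient_add_two_le_card` shows
that then some point outside this subspace is missing from the sums.
-/

section

open Finset Module
open scoped Pointwise

theorem two_mul_card_filter_eq_one {M : Type*} [AddGroup M] [Fintype M] {f : M →+ ZMod 2}
    (hf : f ≠ 0) : 2 * #{x | f x = 1} = Fintype.card M := by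
  obtain ⟨x, hx⟩ := DFunLike.ne_iff.mp hf
  have h_fibers : #{x | f x = 0} = #{x | f x = 1} :=
    AddMonoidHom.card_fiber_eq_of_mem_range f ⟨0, map_zero f⟩ ⟨x, Fin.eq_one_of_ne_zero _ hx⟩
  have h_compl : #{x | ¬f x = 1} = #{x | f x = 0} := by
    simp only [(by decide : ∀ t : ZMod 2, ¬t = 1 ↔ t = 0)]
  rw [two_mul, ← card_univ, ← card_filter_add_card_filter_not (s := univ) (f · = 1), h_compl,
    h_fibers]

theorem natCard_dual {K V : Type*} [Field K] [AddCommGroup V] [Module K V]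
    [FiniteDimensional K V] : Nat.card (Dual K V) = Nat.card V := by
  rw [natCard_eq_pow_finrank (K := K), Subspace.dual_finrank_eq, ← natCard_eq_pow_finrank (K := K)]

section Separation

variable {E : Type*} [AddCommGroup E] [Module (ZMod 2) E]

theorem zmodTwo_add_eq_zero {x y : E} : x + y = 0 ↔ x = y := by
  rw [← ZModModule.sub_eq_add, sub_eq_zero]

theorem zmodTwo_add_add_cancel_right (x y : E) : x + y + y = x := by
  rw [add_assoc, ZModModule.add_self, add_zero]

theorem zmodTwo_add_eq_iff_eq_add {x y z : E} : x + y = z ↔ x = z + y := by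
  rw [← ZModModule.sub_eq_add z, eq_sub_iff_add_eq]

/-- The number of pairs of points of `T` separated by the hyperplane `f = 0`, each pair being
counted once: one point lies on the hyperplane and the other one does not. -/
def sepCard (f : Dual (ZMod 2) E) (T : Finset E) : ℕ :=
  #{t ∈ T | f t = 0} * #{t ∈ T | f t = 1}

theorem two_mul_sepCard (f : Dual (ZMod 2) E) (T : Finset E) :
    2 * sepCard f T = ∑ a ∈ T, ∑ b ∈ T, if f (a + b) = 1 then 1 else 0 := by
  have h_split : ∀ s t : ZMod 2, (if s + t = 1 then 1 else 0) =
      (if s = 0 then 1 else 0) * (if t = 1 then 1 else 0) +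
        (if s = 1 then 1 else 0) * (if t = 0 then 1 else 0) := by decide
  simp only [sepCard, map_add, h_split, sum_add_distrib, ← mul_sum, ← sum_mul, ← card_filter]
  ring

theorem four_mul_sum_sepCard [Finite E] [Fintype (Dual (ZMod 2) E)] (T : Finset E) :
    4 * ∑ f : Dual (ZMod 2) E, sepCard f T = Nat.card E * (#T * (#T - 1)) := by
  classical
  have h_pair {a b : E} (hab : a ≠ b) :
      2 * #{f : Dual (ZMod 2) E | f (a + b) = 1} = Nat.card E := by
    have h_eval : (Dual.eval (ZMod 2) E (a + b)).toAddMonoidHom ≠ 0 := fun h ↦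
      hab <| zmodTwo_add_eq_zero.mp <| (forall_dual_apply_eq_zero_iff (ZMod 2) _).mp
        fun f ↦ DFunLike.congr_fun h f
    rw [← natCard_dual (K := ZMod 2), Nat.card_eq_fintype_card]
    exact two_mul_card_filter_eq_one h_eval
  have h_point {a : E} (ha : a ∈ T) :
      2 * ∑ b ∈ T, #{f : Dual (ZMod 2) E | f (a + b) = 1} = Nat.card E * (#T - 1) := by
    rw [← add_sum_erase T _ ha, mul_add, mul_sum,
      sum_congr rfl fun b hb ↦ h_pair (ne_of_mem_erase hb).symm]
    simp [ZModModule.add_self, card_erase_of_mem ha, mul_comm]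
  calc 4 * ∑ f : Dual (ZMod 2) E, sepCard f T
      = 2 * ∑ f : Dual (ZMod 2) E, ∑ a ∈ T, ∑ b ∈ T, if f (a + b) = 1 then 1 else 0 := by
        simp only [← two_mul_sepCard, ← mul_sum]
        ring
    _ = ∑ a ∈ T, 2 * ∑ b ∈ T, #{f : Dual (ZMod 2) E | f (a + b) = 1} := by
        simp only [card_filter]
        rw [sum_comm, mul_sum]
        exact sum_congr rfl fun a _ ↦ by rw [sum_comm]
    _ = Nat.card E * (#T * (#T - 1)) := by
        rw [sum_congr rfl fun a ha ↦ h_point ha, sum_const, smul_eq_mul, mul_left_comm]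

theorem exists_ne_zero_sepCard_le [Finite E] [Nontrivial E] (T : Finset E) :
    ∃ f : Dual (ZMod 2) E, f ≠ 0 ∧
      4 * ((Nat.card E - 1) * sepCard f T) ≤ Nat.card E * (#T * (#T - 1)) := by
  classical
  have : Fintype (Dual (ZMod 2) E) := @Fintype.ofFinite _ (DFunLike.finite _)
  set s : Finset (Dual (ZMod 2) E) := univ.erase 0
  have h_card : #s = Nat.card E - 1 := by
    rw [card_erase_of_mem (mem_univ 0), card_univ, ← Nat.card_eq_fintype_card, natCard_dual]
  have h_sum : 4 * ∑ f ∈ s, sepCard f T = Nat.card E * (#T * (#T - 1)) := by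
    rw [← four_mul_sum_sepCard, ← add_sum_erase univ _ (mem_univ 0)]
    simp [sepCard, s]
  have h_le : ∑ f ∈ s, 4 * ((Nat.card E - 1) * sepCard f T) ≤
      ∑ _f ∈ s, Nat.card E * (#T * (#T - 1)) := by
    rw [sum_const, h_card, smul_eq_mul, ← h_sum, mul_sum, mul_sum]
    exact (sum_congr rfl fun f _ ↦ mul_left_comm _ _ _).le
  have h_nonempty : s.Nonempty := by
    rw [← card_pos, h_card]
    exact Nat.sub_pos_of_lt Finite.one_lt_card
  obtain ⟨f, hf, hle⟩ := exists_le_of_sum_le h_nonempty h_le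
  exact ⟨f, ne_of_mem_erase hf, hle⟩

variable [Fintype E] [DecidableEq E] {T : Finset E}

theorem filter_eq_one_subset_add (hT : T + T = univ) (f : Dual (ZMod 2) E) (e : ZMod 2) :
    ({x | f x = 1} : Finset E) ⊆ {t ∈ T | f t = e} + {t ∈ T | f t = e + 1} := by
  intro x hx
  obtain ⟨a, ha, b, hb, rfl⟩ := mem_add.mp (hT.symm ▸ mem_univ x)
  have h_sum : f a + f b = 1 := by simpa using hx
  have h_cases : ∀ s t e : ZMod 2, s + t = 1 → s = e ∧ t = e + 1 ∨ t = e ∧ s = e + 1 := by decide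
  rcases h_cases _ _ e h_sum with ⟨hae, hbe⟩ | ⟨hbe, hae⟩
  · exact add_mem_add (mem_filter.mpr ⟨ha, hae⟩) (mem_filter.mpr ⟨hb, hbe⟩)
  · rw [add_comm a b]
    exact add_mem_add (mem_filter.mpr ⟨hb, hbe⟩) (mem_filter.mpr ⟨ha, hae⟩)

theorem filter_eq_zero_subset_add (hT : T + T = univ) (f : Dual (ZMod 2) E) (e : ZMod 2) :
    ({x | f x = 0} : Finset E) ⊆ ({t ∈ T | f t = e} + {t ∈ T | f t = e}) ∪
      ({t ∈ T | f t = e + 1} + {t ∈ T | f t = e + 1}) := by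
  intro x hx
  obtain ⟨a, ha, b, hb, rfl⟩ := mem_add.mp (hT.symm ▸ mem_univ x)
  have h_sum : f a + f b = 0 := by simpa using hx
  have h_cases : ∀ s t e : ZMod 2, s + t = 0 → s = e ∧ t = e ∨ s = e + 1 ∧ t = e + 1 := by decide
  rw [mem_union]
  exact (h_cases _ _ e h_sum).imp
    (fun h ↦ add_mem_add (mem_filter.mpr ⟨ha, h.1⟩) (mem_filter.mpr ⟨hb, h.2⟩))
    (fun h ↦ add_mem_add (mem_filter.mpr ⟨ha, h.1⟩) (mem_filter.mpr ⟨hb, h.2⟩))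

theorem card_le_two_mul_sepCard (hT : T + T = univ) {f : Dual (ZMod 2) E} (hf : f ≠ 0) :
    Fintype.card E ≤ 2 * sepCard f T := by
  have hf' : f.toAddMonoidHom ≠ 0 := fun h ↦ hf <| LinearMap.ext fun x ↦ DFunLike.congr_fun h x
  rw [← two_mul_card_filter_eq_one hf']
  exact Nat.mul_le_mul_left 2 <|
    (card_le_card (filter_eq_one_subset_add hT f 0)).trans <| by simpa using! card_add_le

theorem exists_card_filter_eq_four_and_nine (hE : finrank (ZMod 2) E = 6) (hT : T + T = univ)
    (hcard : #T = 13) : ∃ f : Dual (ZMod 2) E, f ≠ 0 ∧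
      ∃ e, #{t ∈ T | f t = e} = 4 ∧ #{t ∈ T | f t = e + 1} = 9 := by
  have hE64 : Fintype.card E = 64 := by rw [card_eq_pow_finrank (K := ZMod 2), hE, ZMod.card]; rfl
  have : Nontrivial E := nontrivial_of_finrank_pos (R := ZMod 2) (by lia)
  obtain ⟨f, hf, h_upper⟩ := exists_ne_zero_sepCard_le T
  have h_lower := card_le_two_mul_sepCard hT hf
  have h_total : #{t ∈ T | f t = 0} + #{t ∈ T | f t = 1} = 13 := by
    rw [← hcard, ← card_filter_add_card_filter_not (s := T) (f · = 0)]
    simp only [(by decide : ∀ t : ZMod 2, ¬t = 0 ↔ t = 1)]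
  rw [Nat.card_eq_fintype_card, hE64, hcard] at h_upper
  rw [hE64] at h_lower
  have h_or : #{t ∈ T | f t = 0} = 4 ∨ #{t ∈ T | f t = 0} = 9 := by
    unfold sepCard at h_upper h_lower
    obtain ⟨n, hn⟩ : ∃ n, #{t ∈ T | f t = 0} = n := ⟨_, rfl⟩
    have hn1 : #{t ∈ T | f t = 1} = 13 - n := by lia
    rw [hn, hn1] at h_upper h_lower
    have : n ≤ 13 := by lia
    interval_cases n <;> lia
  rcases h_or with h | h
  · exact ⟨f, hf, 0, h, by rw [zero_add]; lia⟩
  · exact ⟨f, hf, 1, by lia, h⟩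

end Separation

section Derivative

variable {Q : Type*} [AddCommGroup Q] [Module (ZMod 2) Q]

theorem even_card_filter_add_mem [DecidableEq Q] (A : Finset Q) {d : Q} (hd : d ≠ 0) :
    Even #{z ∈ A | z + d ∈ A} := by
  have h_sum : ∑ _z ∈ A with _z + d ∈ A, (1 : ZMod 2) = 0 :=
    sum_involution (fun z _ ↦ z + d) (fun _ _ ↦ by decide)
      (fun z _ _ ↦ by simpa using hd) (fun z hz ↦ by
        simpa [zmodTwo_add_add_cancel_right, and_comm] using hz)
      (fun z _ ↦ zmodTwo_add_add_cancel_right z d)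
  simpa [ZMod.natCast_eq_zero_iff_even] using h_sum

theorem even_card_filter_add_notMem [DecidableEq Q] {A : Finset Q} (hA : Even #A) {d : Q}
    (hd : d ≠ 0) : Even #{z ∈ A | z + d ∉ A} := by
  rw [← card_filter_add_card_filter_not (s := A) (· + d ∈ A)] at hA
  exact (Nat.even_add.mp hA).mp (even_card_filter_add_mem A hd)

theorem forall_add_mem_iff_mem [DecidableEq Q] {A : Finset Q} {d : Q}
    (h : #{z ∈ A | z + d ∉ A} = 0) (z : Q) : z + d ∈ A ↔ z ∈ A := by
  have h_stable {z : Q} (hz : z ∈ A) : z + d ∈ A :=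
    not_not.mp (filter_eq_empty_iff.mp (card_eq_zero.mp h) hz)
  exact ⟨fun hz ↦ zmodTwo_add_add_cancel_right z d ▸ h_stable hz, h_stable⟩

section Fintype

variable [Fintype Q] [DecidableEq Q]

theorem card_filter_compl_add_notMem_compl (A : Finset Q) (d : Q) :
    #{z ∈ Aᶜ | z + d ∉ Aᶜ} = #{z ∈ A | z + d ∉ A} :=
  card_nbij' (· + d) (· + d)
    (by intro z; simp [zmodTwo_add_add_cancel_right, and_comm])
    (by intro z; simp [zmodTwo_add_add_cancel_right, and_comm])
    (fun z _ ↦ zmodTwo_add_add_cancel_right z d) (fun z _ ↦ zmodTwo_add_add_cancel_right z d)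

theorem forall_add_mem_iff_notMem {A : Finset Q} {d : Q} (h : #{z ∈ A | z + d ∉ A} = #A)
    (h_compl : #{z ∈ A | z + d ∉ A} = #Aᶜ) (z : Q) : z + d ∈ A ↔ z ∉ A := by
  rw [← card_filter_compl_add_notMem_compl] at h_compl
  refine ⟨fun hzd hz ↦ card_filter_eq_iff.mp h z hz hzd, fun hz ↦ ?_⟩
  simpa using card_filter_eq_iff.mp h_compl z (mem_compl.mpr hz)

end Fintype

theorem sum_card_filter_add_notMem {Q : Type*} [AddGroup Q] [Fintype Q] [DecidableEq Q]
    (A : Finset Q) : ∑ d ∈ univ.erase 0, #{z ∈ A | z + d ∉ A} = #A * #Aᶜ := by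
  have h_point (z : Q) : #{d | z + d ∉ A} = #Aᶜ :=
    card_bijective (z + ·) (AddGroup.addLeft_bijective z) (by simp)
  calc ∑ d ∈ univ.erase 0, #{z ∈ A | z + d ∉ A} = ∑ d, #{z ∈ A | z + d ∉ A} := by
        rw [← add_sum_erase univ _ (mem_univ 0)]
        simp
    _ = ∑ z ∈ A, #{d | z + d ∉ A} := by
        simp only [card_filter]
        rw [sum_comm]
    _ = #A * #Aᶜ := by simp [h_point]

/-- The number `m d` of `z ∈ A` with `z + d ∉ A` is even and at most `#Q / 2 ≤ 4`. If it is `0` or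
`4`, then `d` is the required translation; if it is `2` for every `d ≠ 0`, then summing over `d`
gives `#A * #Aᶜ = 2 * (#Q - 1)`, which is impossible for even `#A`. -/
theorem exists_ne_zero_add_mem_iff [Nontrivial Q] [Finite Q] (hQ : finrank (ZMod 2) Q ≤ 3)
    {A : Finset Q} (hA : Even #A) :
    ∃ d : Q, d ≠ 0 ∧ ((∀ z, z + d ∈ A ↔ z ∈ A) ∨ ∀ z, z + d ∈ A ↔ z ∉ A) := by
  classical
  have := Fintype.ofFinite Q
  by_contra! h_none
  have h_card : Fintype.card Q = 2 ^ finrank (ZMod 2) Q := by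
    rw [card_eq_pow_finrank (K := ZMod 2), ZMod.card]
  have h_pos : 0 < finrank (ZMod 2) Q := finrank_pos
  have h_add : #A + #Aᶜ = Fintype.card Q := card_add_card_compl A
  have h_two {d : Q} (hd : d ≠ 0) : #{z ∈ A | z + d ∉ A} = 2 := by
    obtain ⟨m, hm⟩ := even_card_filter_add_notMem hA hd
    have h_ne_zero : #{z ∈ A | z + d ∉ A} ≠ 0 := fun h ↦
      (h_none d hd).1.elim fun z hz ↦ by have := forall_add_mem_iff_mem h z; tauto
    have h_ne_half : ¬(#{z ∈ A | z + d ∉ A} = #A ∧ #{z ∈ A | z + d ∉ A} = #Aᶜ) := fun h ↦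
      (h_none d hd).2.elim fun z hz ↦ by have := forall_add_mem_iff_notMem h.1 h.2 z; tauto
    have h_le : #{z ∈ A | z + d ∉ A} ≤ #A := card_filter_le _ _
    have h_le_compl : #{z ∈ A | z + d ∉ A} ≤ #Aᶜ :=
      (card_filter_compl_add_notMem_compl A d).symm.trans_le (card_filter_le _ _)
    interval_cases finrank (ZMod 2) Q <;> lia
  have h_sum := sum_card_filter_add_notMem A
  rw [sum_congr rfl fun d hd ↦ h_two (ne_of_mem_erase hd), sum_const, smul_eq_mul,
    card_erase_of_mem (mem_univ 0), card_univ] at h_sum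
  obtain ⟨k, hk⟩ := hA
  have h_compl : #Aᶜ = Fintype.card Q - #A := card_compl A
  rw [h_compl, h_card, hk] at h_sum
  have hk_le : k ≤ 4 := by interval_cases finrank (ZMod 2) Q <;> lia
  interval_cases finrank (ZMod 2) Q <;> interval_cases k <;> lia

theorem exists_ne_zero_add_apply_add_eq [Nontrivial Q] [Fintype Q] (hQ : finrank (ZMod 2) Q ≤ 3)
    {c : Q → ZMod 2} (hc : ∑ z, c z = 0) : ∃ d : Q, d ≠ 0 ∧ ∃ e, ∀ z, c z + c (z + d) = e := by
  have h_even : Even #{z | c z = 1} := by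
    rw [← ZMod.natCast_eq_zero_iff_even, ← hc, card_filter, Nat.cast_sum]
    exact sum_congr rfl fun z _ ↦
      (by decide : ∀ t : ZMod 2, ((if t = 1 then 1 else 0 : ℕ) : ZMod 2) = t) (c z)
  obtain ⟨d, hd, h | h⟩ := exists_ne_zero_add_mem_iff hQ h_even
  · refine ⟨d, hd, 0, fun z ↦ ?_⟩
    exact (by decide : ∀ s t : ZMod 2, (t = 1 ↔ s = 1) → s + t = 0) _ _ (by simpa using h z)
  · refine ⟨d, hd, 1, fun z ↦ ?_⟩
    exact (by decide : ∀ s t : ZMod 2, (t = 1 ↔ ¬s = 1) → s + t = 1) _ _ (by simpa using h z)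

end Derivative

section Cosets

variable {E : Type*} [AddCommGroup E] [Module (ZMod 2) E] {K : Submodule (ZMod 2) E}

theorem exists_dual_apply_eq_zero_of_two_le_finrank (hK : 2 ≤ finrank (ZMod 2) K) (s : E) :
    ∃ f : Dual (ZMod 2) E, f s = 0 ∧ (∃ k ∈ K, f k = 1) ∧ ∃ k ∈ K, k ≠ 0 ∧ f k = 0 := by
  have hK_not_le : ¬K ≤ Submodule.span (ZMod 2) {s} := fun h ↦ by
    have := Submodule.finrank_mono h
    have := finrank_span_le_card (R := ZMod 2) ({s} : Set E)
    rw [Set.toFinset_singleton, card_singleton] at this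
    lia
  obtain ⟨k, hk, hks⟩ := SetLike.not_le_iff_exists.mp hK_not_le
  obtain ⟨f, hfk, hf⟩ := Submodule.exists_le_ker_of_notMem hks
  have : FiniteDimensional (ZMod 2) K := .of_finrank_pos (by lia)
  have h_ker : LinearMap.ker (f.domRestrict K) ≠ ⊥ :=
    LinearMap.ker_ne_bot_of_finrank_lt (by rw [finrank_self]; lia)
  obtain ⟨l, hl, hl_ne⟩ := Submodule.exists_mem_ne_zero_of_ne_bot h_ker
  exact ⟨f, hf (Submodule.mem_span_singleton_self s), ⟨k, hk, Fin.eq_one_of_ne_zero _ hfk⟩,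
    l, l.2, by simpa using hl_ne, hl⟩

theorem exists_section_forall_eq_or_eq {α β : Type*} [Nonempty α] [Fintype β] {π : α → β}
    {U : Finset α} (hπ : ∀ z, ∃ u ∈ U, π u = z) (hU : #U ≤ Fintype.card β + 1) :
    ∃ g : β → α, (∀ z, π (g z) = z) ∧ ∃ q, ∀ u ∈ U, u = g (π u) ∨ u = q := by
  classical
  choose g hgU hg using hπ
  have h_card : #(U \ univ.image g) ≤ 1 := by
    rw [card_sdiff_of_subset (image_subset_iff.mpr fun z _ ↦ hgU z),
      card_image_of_injective _ (Function.LeftInverse.injective hg), card_univ]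
    lia
  obtain ⟨q, hq⟩ := card_le_one_iff_subset_singleton.mp h_card
  refine ⟨g, hg, q, fun u hu ↦ or_iff_not_imp_left.mpr fun hne ↦ mem_singleton.mp (hq ?_)⟩
  refine mem_sdiff.mpr ⟨hu, fun h ↦ hne ?_⟩
  obtain ⟨z, -, rfl⟩ := mem_image.mp h
  rw [hg]

theorem exists_eq_section_add_of_add_eq {g : E ⧸ K → E} {q u v w : E}
    (hu : u = g (K.mkQ u) ∨ u = q) (hv : v = g (K.mkQ v) ∨ v = q) (huv : u + v = w) (hw : w ∉ K) :
    (∃ z, w = g z + g (z + K.mkQ w)) ∨ w = q + g (K.mkQ q + K.mkQ w) := by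
  have h_add : K.mkQ u + K.mkQ w = K.mkQ v := by
    rw [← huv, map_add, ← add_assoc, ZModModule.add_self, zero_add]
  rcases hu with hu | rfl
  · rcases hv with hv | rfl
    · exact .inl ⟨K.mkQ u, by rw [h_add, ← hu, ← hv, huv]⟩
    · right
      rw [← h_add, zmodTwo_add_add_cancel_right, ← hu, add_comm, huv]
  · rcases hv with hv | rfl
    · exact .inr (by rw [h_add, ← hv, huv])
    · exact absurd (huv ▸ ZModModule.add_self v ▸ K.zero_mem) hw

/-- If `#U ≤ #(E ⧸ K) + 1`, then `U` consists of one point `g z` over every `z : E ⧸ K` and of at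
most one further point `q`. Choose a functional `f` vanishing on the sum of all `g z` and a
translation `d ≠ 0` for which `f (g z + g (z + d))` is constant. Of the points over `d` on which
`f` takes the other value, only `q + g (z + d)`, where `q` lies over `z`, can belong to `U + U`, but
there are at least two such points since `K` has rank at least `2`. -/
theorem natCard_quotient_add_two_le_card [Finite E] (hK : 2 ≤ finrank (ZMod 2) K)
    (hQ_pos : 0 < finrank (ZMod 2) (E ⧸ K)) (hQ : finrank (ZMod 2) (E ⧸ K) ≤ 3) {U : Finset E}
    (hU : ∀ z, ∃ u ∈ U, K.mkQ u = z)
    (h_sum : ∀ w ∉ K, ∃ u ∈ U, ∃ v ∈ U, u + v = w) : Nat.card (E ⧸ K) + 2 ≤ #U := by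
  have : Finite (E ⧸ K) := .of_surjective _ K.mkQ_surjective
  have : Nontrivial (E ⧸ K) := nontrivial_of_finrank_pos hQ_pos
  have := Fintype.ofFinite (E ⧸ K)
  by_contra! h_lt
  rw [Nat.card_eq_fintype_card] at h_lt
  obtain ⟨g, -, q, hq⟩ := exists_section_forall_eq_or_eq hU (by lia)
  obtain ⟨f, hf, ⟨k₁, hk₁, hfk₁⟩, k₀, hk₀, hk₀_ne, hfk₀⟩ :=
    exists_dual_apply_eq_zero_of_two_le_finrank hK (∑ z, g z)
  obtain ⟨d, hd, e, he⟩ := exists_ne_zero_add_apply_add_eq hQ (c := fun z ↦ f (g z)) <| by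
    rwa [← map_sum]
  have h_unique {w : E} (hwd : K.mkQ w = d) (hfw : f w ≠ e) : w = q + g (K.mkQ q + d) := by
    have hwK : w ∉ K := fun h ↦ hd <| by rw [← hwd, Submodule.mkQ_apply,
      (Submodule.Quotient.mk_eq_zero K).mpr h]
    obtain ⟨u, hu, v, hv, huv⟩ := h_sum w hwK
    rcases exists_eq_section_add_of_add_eq (hq u hu) (hq v hv) huv hwK with ⟨z, hz⟩ | h
    · refine absurd ?_ hfw
      rw [hz, hwd, map_add]
      exact he z
    · rwa [hwd] at h
  have h_add_mem {w k : E} (hwd : K.mkQ w = d) (hk : k ∈ K) : K.mkQ (w + k) = d := by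
    rw [map_add, hwd, Submodule.mkQ_apply, (Submodule.Quotient.mk_eq_zero K).mpr hk, add_zero]
  obtain ⟨w, hwd, hfw⟩ : ∃ w, K.mkQ w = d ∧ f w ≠ e := by
    obtain ⟨w, hw⟩ := K.mkQ_surjective d
    rcases eq_or_ne (f w) e with hfw | hfw
    · exact ⟨w + k₁, h_add_mem hw hk₁, by simp [hfw, hfk₁]⟩
    · exact ⟨w, hw, hfw⟩
  have h_eq : w = w + k₀ := (h_unique hwd hfw).trans
    (h_unique (h_add_mem hwd hk₀) (by rwa [map_add, hfk₀, add_zero])).symm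
  exact hk₀_ne (left_eq_add.mp h_eq)

theorem natCard_quotient_add_two_le_card_image [Finite E] {N : Submodule (ZMod 2) E}
    [DecidableEq (E ⧸ N)] (hNK : N ≤ K) (h_rank : finrank (ZMod 2) N + 2 ≤ finrank (ZMod 2) K)
    (hQ_pos : 0 < finrank (ZMod 2) (E ⧸ K)) (hQ : finrank (ZMod 2) (E ⧸ K) ≤ 3) {U : Finset E}
    (hU : ∀ x, ∃ k ∈ K, x + k ∈ U) (h_sum : ∀ w ∉ K, ∃ u ∈ U, ∃ v ∈ U, u + v = w) :
    Nat.card (E ⧸ K) + 2 ≤ #(U.image N.mkQ) := by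
  have : Finite (E ⧸ N) := .of_surjective _ N.mkQ_surjective
  let iso := Submodule.quotientQuotientEquivQuotient N K hNK
  have h_finrank : finrank (ZMod 2) ((E ⧸ N) ⧸ K.map N.mkQ) = finrank (ZMod 2) (E ⧸ K) :=
    iso.finrank_eq
  rw [← Nat.card_congr iso.toEquiv]
  refine natCard_quotient_add_two_le_card ?_ (h_finrank ▸ hQ_pos) (h_finrank ▸ hQ)
    (fun z ↦ ?_) fun w hw ↦ ?_
  · have h_N := N.finrank_quotient_add_finrank
    have h_K := K.finrank_quotient_add_finrank
    have h_map := (K.map N.mkQ).finrank_quotient_add_finrank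
    lia
  · obtain ⟨y, rfl⟩ := (K.map N.mkQ).mkQ_surjective z
    obtain ⟨x, rfl⟩ := N.mkQ_surjective y
    obtain ⟨k, hk, hxk⟩ := hU x
    refine ⟨_, mem_image_of_mem _ hxk, ?_⟩
    have hk_map : (K.map N.mkQ).mkQ (N.mkQ k) = 0 :=
      (Submodule.Quotient.mk_eq_zero _).mpr (Submodule.mem_map_of_mem hk)
    rw [map_add, map_add, hk_map, add_zero]
  · obtain ⟨x, rfl⟩ := N.mkQ_surjective w
    obtain ⟨u, hu, v, hv, rfl⟩ := h_sum x fun h ↦ hw (Submodule.mem_map_of_mem h)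
    exact ⟨_, mem_image_of_mem _ hu, _, mem_image_of_mem _ hv, (map_add _ _ _).symm⟩

end Cosets

section Fibers

theorem card_fiber_le_of_card_le {α β : Type*} [Fintype β] [DecidableEq β] {π : α → β}
    {U : Finset α} {k m : ℕ} (hk : ∀ z, k ≤ #{u ∈ U | π u = z}) (hU : #U ≤ k * Fintype.card β + m)
    (z : β) : #{u ∈ U | π u = z} ≤ k + m := by
  have h_total : #U = ∑ y, #{u ∈ U | π u = y} :=
    card_eq_sum_card_fiberwise fun _ _ ↦ mem_coe.mpr (mem_univ _)
  have h_rest : ∑ _y ∈ univ.erase z, k ≤ ∑ y ∈ univ.erase z, #{u ∈ U | π u = y} :=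
    sum_le_sum fun y _ ↦ hk y
  have h_const : k + ∑ _y ∈ univ.erase z, k = k * Fintype.card β := by
    rw [add_sum_erase univ (fun _ ↦ k) (mem_univ z), sum_const, card_univ, smul_eq_mul, mul_comm]
  rw [← add_sum_erase univ _ (mem_univ z)] at h_total
  lia

variable {E Q : Type*} [AddCommGroup E] [Module (ZMod 2) E] [AddCommGroup Q] [Module (ZMod 2) Q]

theorem card_image_add_card_le_card_of_forall_add_mem {F : Type*} [AddCommGroup F]
    [Module (ZMod 2) F] [DecidableEq F] [Fintype Q] {π : E →ₗ[ZMod 2] Q} {ρ : E →ₗ[ZMod 2] F}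
    {s : E} (hs : s ≠ 0) (hπs : π s = 0) (hρs : ρ s = 0) {U : Finset E} {p : Q → E}
    (hp : ∀ z, p z ∈ U) (hps : ∀ z, p z + s ∈ U) (hπ : ∀ z, π (p z) = z) :
    #(U.image ρ) + Fintype.card Q ≤ #U := by
  classical
  have h_inj : Function.Injective fun z ↦ p z + s := fun y z h ↦ by
    simpa [hπ, hπs] using congr(π $h)
  have h_image : U.image ρ ⊆ (U \ univ.image fun z ↦ p z + s).image ρ := by
    intro y hy
    obtain ⟨u, hu, rfl⟩ := mem_image.mp hy
    by_cases h : u ∈ univ.image fun z ↦ p z + s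
    · obtain ⟨z, -, rfl⟩ := mem_image.mp h
      rw [map_add, hρs, add_zero]
      refine mem_image_of_mem ρ (mem_sdiff.mpr ⟨hp z, fun h_mem ↦ ?_⟩)
      obtain ⟨y, -, hy⟩ := mem_image.mp h_mem
      obtain rfl : y = z := by simpa [hπ, hπs] using congr(π $hy)
      exact hs (add_eq_left.mp hy)
    · exact mem_image_of_mem ρ (mem_sdiff.mpr ⟨hu, h⟩)
  have h_sub : (univ.image fun z ↦ p z + s) ⊆ U := image_subset_iff.mpr fun z _ ↦ hps z
  have h_card := (card_le_card h_image).trans card_image_le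
  have h_le := card_le_card h_sub
  rw [card_sdiff_of_subset h_sub] at h_card
  rw [card_image_of_injective _ h_inj, card_univ] at h_card h_le
  lia

theorem exists_map_eq_and_apply_eq {π : E →ₗ[ZMod 2] Q} (hπ : Function.Surjective π)
    {f : Dual (ZMod 2) E} {x : E} (hπx : π x = 0) (hfx : f x = 1) (z : Q) (e : ZMod 2) :
    ∃ y, π y = z ∧ f y = e := by
  obtain ⟨y, rfl⟩ := hπ z
  rcases (by decide : ∀ s t : ZMod 2, s = t ∨ s + 1 = t) (f y) e with h | h
  exacts [⟨y, rfl, h⟩, ⟨y + x, by rw [map_add, hπx, add_zero], by rw [map_add, hfx, h]⟩]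

/-- The translates of `U` by `0`, `a`, `b` and `c` cover the space, where `b` and `c` are distinct
nonzero vectors of the hyperplane `f = 0`, the vector `a` lies off it, and all three vectors are
killed by the projection `π`. Each fibre of `π` is then covered by the points of `U` in it. -/
structure FourTranslateCover (U : Finset E) (a b c : E) (f : Dual (ZMod 2) E)
    (π : E →ₗ[ZMod 2] Q) : Prop where
  cover (x : E) : x ∈ U ∨ x + a ∈ U ∨ x + b ∈ U ∨ x + c ∈ U
  b_ne_zero : b ≠ 0
  c_ne_zero : c ≠ 0
  b_ne_c : b ≠ c
  apply_a : f a = 1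
  apply_b : f b = 0
  apply_c : f c = 0
  surjective : Function.Surjective π
  map_a : π a = 0
  map_b : π b = 0
  map_c : π c = 0

namespace FourTranslateCover

variable {U : Finset E} {a b c : E} {f : Dual (ZMod 2) E} {π : E →ₗ[ZMod 2] Q}

theorem two_le_card_fiber [DecidableEq Q] (hU : FourTranslateCover U a b c f π) (z : Q) :
    2 ≤ #{u ∈ U | π u = z} := by
  obtain ⟨x, hx, hxz⟩ : ∃ x ∈ U, π x = z := by
    obtain ⟨y, rfl⟩ := hU.surjective z
    rcases hU.cover y with h | h | h | h
    exacts [⟨_, h, rfl⟩, ⟨_, h, by simp [hU.map_a]⟩, ⟨_, h, by simp [hU.map_b]⟩,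
      ⟨_, h, by simp [hU.map_c]⟩]
  obtain ⟨k, hk, hk_ne, hπk⟩ : ∃ k, x + k ∈ U ∧ k ≠ 0 ∧ π k = 0 := by
    have h_ne {k : E} (hfk : f k = 1) : k ≠ 0 := fun h ↦ by simp [h] at hfk
    rcases hU.cover (x + (a + b)) with h | h | h | h
    · exact ⟨a + b, h, h_ne (by simp [hU.apply_a, hU.apply_b]), by simp [hU.map_a, hU.map_b]⟩
    · exact ⟨b, by rwa [add_comm a b, ← add_assoc, zmodTwo_add_add_cancel_right] at h,
        hU.b_ne_zero, hU.map_b⟩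
    · exact ⟨a, by rwa [← add_assoc, zmodTwo_add_add_cancel_right] at h, h_ne hU.apply_a, hU.map_a⟩
    · exact ⟨a + b + c, by rwa [add_assoc] at h,
        h_ne (by simp [hU.apply_a, hU.apply_b, hU.apply_c]), by simp [hU.map_a, hU.map_b, hU.map_c]⟩
  refine one_lt_card.mpr ⟨x, ?_, x + k, ?_, fun h ↦ hk_ne (left_eq_add.mp h)⟩
  exacts [mem_filter.mpr ⟨hx, hxz⟩, mem_filter.mpr ⟨hk, by rw [map_add, hπk, hxz, add_zero]⟩]

theorem exists_add_mem_of_add_notMem (hU : FourTranslateCover U a b c f π) {x : E}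
    (hx : x + (a + b + c) ∉ U) : ∃ k, x + k ∈ U ∧ k ≠ 0 ∧ f k = 0 ∧ π k = 0 := by
  rcases hU.cover (x + (b + c)) with h | h | h | h
  · exact ⟨b + c, h, fun h0 ↦ hU.b_ne_c (zmodTwo_add_eq_zero.mp h0),
      by simp [hU.apply_b, hU.apply_c], by simp [hU.map_b, hU.map_c]⟩
  · exact absurd (by rwa [add_assoc, add_comm (b + c), ← add_assoc a] at h) hx
  · exact ⟨c, by rwa [add_comm b, ← add_assoc, zmodTwo_add_add_cancel_right] at h, hU.c_ne_zero,
      hU.apply_c, hU.map_c⟩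
  · exact ⟨b, by rwa [← add_assoc, zmodTwo_add_add_cancel_right] at h, hU.b_ne_zero,
      hU.apply_b, hU.map_b⟩

theorem card_zero_b_c_b_add_c [DecidableEq E] (hU : FourTranslateCover U a b c f π) :
    #{0, b, c, b + c} = 4 := by
  have hbc : b + c ≠ 0 := fun h ↦ hU.b_ne_c (zmodTwo_add_eq_zero.mp h)
  rw [card_insert_of_notMem (by simp [hU.b_ne_zero.symm, hU.c_ne_zero.symm, hbc.symm]),
    card_insert_of_notMem (by simp [hU.b_ne_c, hU.c_ne_zero]),
    card_pair (by simpa using hU.b_ne_zero)]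

theorem four_le_card_fiber [DecidableEq Q] (hU : FourTranslateCover U a b c f π) {z : Q}
    {e : ZMod 2} (h_empty : ∀ u ∈ U, π u = z → f u ≠ e) : 4 ≤ #{u ∈ U | π u = z} := by
  classical
  obtain ⟨y, hyz, hye⟩ := exists_map_eq_and_apply_eq hU.surjective hU.map_a hU.apply_a z e
  have h_notMem {k : E} (hfk : f k = 0) (hπk : π k = 0) : y + k ∉ U := fun h ↦
    h_empty _ h (by simp [hyz, hπk]) (by simp [hye, hfk])
  have h_mem {k : E} (hfk : f k = 0) (hπk : π k = 0) :
      y + a + k ∈ ({u ∈ U | π u = z} : Finset E) := by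
    refine mem_filter.mpr ⟨?_, by simp [hyz, hU.map_a, hπk]⟩
    rw [add_right_comm]
    rcases hU.cover (y + k) with h | h | h | h
    · exact absurd h (h_notMem hfk hπk)
    · exact h
    · exact absurd (add_assoc y k b ▸ h)
        (h_notMem (by simp [hfk, hU.apply_b]) (by simp [hπk, hU.map_b]))
    · exact absurd (add_assoc y k c ▸ h)
        (h_notMem (by simp [hfk, hU.apply_c]) (by simp [hπk, hU.map_c]))
  rw [← hU.card_zero_b_c_b_add_c, ← card_image_of_injective _ (add_right_injective (y + a))]
  refine card_le_card (image_subset_iff.mpr fun k hk ↦ ?_)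
  simp only [mem_insert, mem_singleton] at hk
  rcases hk with rfl | rfl | rfl | rfl
  exacts [h_mem (map_zero f) (map_zero π), h_mem hU.apply_b hU.map_b, h_mem hU.apply_c hU.map_c,
    h_mem (by simp [hU.apply_b, hU.apply_c]) (by simp [hU.map_b, hU.map_c])]

/-- If the fibre over `z` contains no pair `p`, `p + (a + b + c)`, then covering `x + (b + c)` for a
point `x` of the fibre requires a second point of `U` on the same side of the hyperplane. -/
theorem exists_mem_add_mem_of_card_fiber_le_three [DecidableEq Q]
    (hU : FourTranslateCover U a b c f π) {z : Q} (hz : #{u ∈ U | π u = z} ≤ 3) :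
    ∃ p ∈ U, π p = z ∧ p + (a + b + c) ∈ U := by
  by_contra! h_none
  have h_face (e : ZMod 2) : 2 ≤ #{u ∈ {u ∈ U | π u = z} | f u = e} := by
    by_cases h_empty : ∀ u ∈ U, π u = z → f u ≠ e
    · have := hU.four_le_card_fiber h_empty
      lia
    · push Not at h_empty
      obtain ⟨x, hx, hxz, hxe⟩ := h_empty
      obtain ⟨k, hk, hk_ne, hfk, hπk⟩ := hU.exists_add_mem_of_add_notMem (h_none x hx hxz)
      exact one_lt_card.mpr ⟨x, by simp [hx, hxz, hxe], x + k, by simp [hk, hxz, hxe, hfk, hπk],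
        fun h ↦ hk_ne (left_eq_add.mp h)⟩
  have h_zero := h_face 0
  have h_one := h_face 1
  rw [← card_filter_add_card_filter_not (f · = 0)] at hz
  simp only [(by decide : ∀ t : ZMod 2, ¬t = 0 ↔ t = 1)] at hz
  lia

theorem card_image_add_card_le_card {F : Type*} [AddCommGroup F] [Module (ZMod 2) F]
    [DecidableEq F] [Fintype Q] (hU : FourTranslateCover U a b c f π)
    (h_card : #U ≤ 2 * Fintype.card Q + 1) {ρ : E →ₗ[ZMod 2] F} (hρ : ρ (a + b + c) = 0) :
    #(U.image ρ) + Fintype.card Q ≤ #U := by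
  classical
  choose p hp hpz hp_add using fun z ↦ hU.exists_mem_add_mem_of_card_fiber_le_three
    (card_fiber_le_of_card_le hU.two_le_card_fiber h_card z)
  have h_ne : a + b + c ≠ 0 := fun h ↦ by
    simpa [hU.apply_a, hU.apply_b, hU.apply_c] using congr(f $h)
  exact card_image_add_card_le_card_of_forall_add_mem h_ne
    (by simp [hU.map_a, hU.map_b, hU.map_c]) hρ hp hp_add hpz

end FourTranslateCover

end Fibers

section RankFive

variable {E : Type*} [AddCommGroup E] [Module (ZMod 2) E] {a b c : E}

theorem zmodTwo_notMem_span_pair (ha : a ≠ 0) (hab : a ≠ b) (hac : a ≠ c) (habc : a + b + c ≠ 0) :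
    a ∉ Submodule.span (ZMod 2) {b, c} := by
  have h_cases : ∀ t : ZMod 2, t = 0 ∨ t = 1 := by decide
  rw [Submodule.mem_span_pair]
  rintro ⟨s, t, h⟩
  rcases h_cases s with rfl | rfl <;> rcases h_cases t with rfl | rfl
  · exact ha (by simpa using h.symm)
  · exact hac (by simpa using h.symm)
  · exact hab (by simpa using h.symm)
  · rw [one_smul, one_smul] at h
    exact habc (by rw [add_assoc, h, ZModModule.add_self])

theorem zmodTwo_finrank_span_pair (hb : b ≠ 0) (hc : c ≠ 0) (hbc : b ≠ c) :
    finrank (ZMod 2) (Submodule.span (ZMod 2) {b, c}) = 2 := by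
  have h_indep : LinearIndependent (ZMod 2) ![b, c] :=
    (LinearIndependent.pair_iff' hb).mpr fun t ↦ by
      rcases (by decide : ∀ t : ZMod 2, t = 0 ∨ t = 1) t with rfl | rfl
      exacts [by simpa using hc.symm, by simpa using hbc]
  rw [← Matrix.range_cons_cons_empty b c ![], finrank_span_eq_card h_indep, Fintype.card_fin]

theorem zmodTwo_finrank_span_triple [FiniteDimensional (ZMod 2) E] (ha : a ≠ 0) (hb : b ≠ 0)
    (hc : c ≠ 0) (hab : a ≠ b) (hac : a ≠ c) (hbc : b ≠ c) (habc : a + b + c ≠ 0) :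
    finrank (ZMod 2) (Submodule.span (ZMod 2) {a, b, c}) = 3 := by
  rw [Submodule.span_insert, sup_comm,
    Submodule.finrank_sup_span_singleton (zmodTwo_notMem_span_pair ha hab hac habc),
    zmodTwo_finrank_span_pair hb hc hbc]

theorem exists_fourTranslateCover (ha : a ≠ 0) (hb : b ≠ 0) (hc : c ≠ 0) (hab : a ≠ b) (hac : a ≠ c)
    (hbc : b ≠ c) (habc : a + b + c ≠ 0) {U : Finset E}
    (hU : ∀ x, x ∈ U ∨ x + a ∈ U ∨ x + b ∈ U ∨ x + c ∈ U) :
    ∃ f, FourTranslateCover U a b c f (Submodule.span (ZMod 2) {a, b, c}).mkQ := by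
  obtain ⟨f, hfa, hf⟩ :=
    Submodule.exists_le_ker_of_notMem (zmodTwo_notMem_span_pair ha hab hac habc)
  have h_mkQ {x : E} (hx : x ∈ ({a, b, c} : Set E)) :
      (Submodule.span (ZMod 2) {a, b, c}).mkQ x = 0 :=
    (Submodule.Quotient.mk_eq_zero _).mpr (Submodule.mem_span_of_mem hx)
  exact ⟨f, {
    cover := hU
    b_ne_zero := hb
    c_ne_zero := hc
    b_ne_c := hbc
    apply_a := Fin.eq_one_of_ne_zero _ hfa
    apply_b := hf (Submodule.mem_span_of_mem (by simp))
    apply_c := hf (Submodule.mem_span_of_mem (by simp))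
    surjective := Submodule.mkQ_surjective _
    map_a := h_mkQ (by simp)
    map_b := h_mkQ (by simp)
    map_c := h_mkQ (by simp) }⟩

theorem ten_le_card_of_forall_mem_or_add_mem [Finite E] (hE : finrank (ZMod 2) E = 5) (ha : a ≠ 0)
    (hb : b ≠ 0) (hc : c ≠ 0) (hab : a ≠ b) (hac : a ≠ c) (hbc : b ≠ c) {U : Finset E}
    (hU : ∀ x, x ∈ U ∨ x + a ∈ U ∨ x + b ∈ U ∨ x + c ∈ U)
    (h_sum : ∀ w ∉ Submodule.span (ZMod 2) {a, b, c}, ∃ u ∈ U, ∃ v ∈ U, u + v = w) : 10 ≤ #U := by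
  classical
  set W := Submodule.span (ZMod 2) {a, b, c} with hW_def
  have haW : a ∈ W := Submodule.mem_span_of_mem (by simp)
  have hbW : b ∈ W := Submodule.mem_span_of_mem (by simp)
  have hcW : c ∈ W := Submodule.mem_span_of_mem (by simp)
  have h_cover (x : E) : ∃ k ∈ W, x + k ∈ U := by
    rcases hU x with h | h | h | h
    exacts [⟨0, W.zero_mem, by rwa [add_zero]⟩, ⟨a, haW, h⟩, ⟨b, hbW, h⟩, ⟨c, hcW, h⟩]
  have h_finrank := W.finrank_quotient_add_finrank
  have h_natCard : Nat.card (E ⧸ W) = 2 ^ finrank (ZMod 2) (E ⧸ W) := by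
    rw [natCard_eq_pow_finrank (K := ZMod 2), Nat.card_zmod]
  rw [hE] at h_finrank
  by_cases habc : a + b + c = 0
  · have hW : finrank (ZMod 2) W = 2 := by
      rw [hW_def, Submodule.span_insert_eq_span, zmodTwo_finrank_span_pair hb hc hbc]
      rw [add_assoc, zmodTwo_add_eq_zero] at habc
      exact habc ▸ add_mem (Submodule.mem_span_of_mem (by simp))
        (Submodule.mem_span_of_mem (by simp))
    have := natCard_quotient_add_two_le_card_image (bot_le (a := W)) (by simp [hW]) (by lia)
      (by lia) h_cover h_sum
    have h_image : #(U.image (⊥ : Submodule (ZMod 2) E).mkQ) ≤ #U := card_image_le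
    rw [h_natCard, (by lia : finrank (ZMod 2) (E ⧸ W) = 3)] at this
    lia
  · have hW : finrank (ZMod 2) W = 3 := zmodTwo_finrank_span_triple ha hb hc hab hac hbc habc
    set N := Submodule.span (ZMod 2) {a + b + c}
    have hNW : N ≤ W := by
      rw [Submodule.span_singleton_le_iff_mem]
      exact add_mem (add_mem haW hbW) hcW
    have := natCard_quotient_add_two_le_card_image hNW
      (by simp [N, finrank_span_singleton habc, hW]) (by lia) (by lia) h_cover h_sum
    rw [h_natCard, (by lia : finrank (ZMod 2) (E ⧸ W) = 2)] at this
    by_contra! h_lt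
    obtain ⟨f, hf⟩ := exists_fourTranslateCover ha hb hc hab hac hbc habc hU
    have : Finite (E ⧸ W) := .of_surjective _ W.mkQ_surjective
    have := Fintype.ofFinite (E ⧸ W)
    rw [Nat.card_eq_fintype_card] at h_natCard
    have := hf.card_image_add_card_le_card (ρ := N.mkQ) (by lia) <|
      (Submodule.Quotient.mk_eq_zero N).mpr (Submodule.mem_span_singleton_self _)
    lia

theorem exists_eq_image_add_of_card_eq_four {M : Type*} [AddCommGroup M] [DecidableEq M]
    {V : Finset M} (hV : #V = 4) :
    ∃ p a b c : M, V = ({0, a, b, c} : Finset M).image (p + ·) ∧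
      a ≠ 0 ∧ b ≠ 0 ∧ c ≠ 0 ∧ a ≠ b ∧ a ≠ c ∧ b ≠ c := by
  obtain ⟨p, t, hpt, rfl, ht⟩ := card_eq_succ.mp hV
  obtain ⟨q, r, s, hqr, hqs, hrs, rfl⟩ := card_eq_three.mp ht
  simp only [mem_insert, mem_singleton, not_or] at hpt
  refine ⟨p, q - p, r - p, s - p, ?_, ?_⟩
  · simp only [image_insert, image_singleton, add_zero, add_sub_cancel]
  · simpa [sub_eq_zero, eq_comm] using ⟨hpt.1, hpt.2.1, hpt.2.2, hqr, hqs, hrs⟩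

theorem ten_le_card_of_add_eq_univ [Fintype E] [DecidableEq E] (hE : finrank (ZMod 2) E = 5)
    {U V : Finset E} (hV : #V ≤ 4) (hUV : U + V = univ) (h_sum : (U + U) ∪ (V + V) = univ) :
    10 ≤ #U := by
  have h_card : 32 ≤ #U * #V := by
    have h : Fintype.card E = 32 := by rw [card_eq_pow_finrank (K := ZMod 2), hE, ZMod.card]; rfl
    rw [← h, ← card_univ, ← hUV]
    exact card_add_le
  by_contra! h_lt
  have hV' : #V = 4 := by
    interval_cases #V <;> lia
  obtain ⟨p, a, b, c, rfl, ha, hb, hc, hab, hac, hbc⟩ := exists_eq_image_add_of_card_eq_four hV'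
  have h_span {k : E} (hk : k ∈ ({0, a, b, c} : Finset E)) :
      k ∈ Submodule.span (ZMod 2) {a, b, c} := by
    rcases mem_insert.mp hk with rfl | hk
    exacts [zero_mem _, Submodule.mem_span_of_mem (by simpa using hk)]
  refine h_lt.not_ge (ten_le_card_of_forall_mem_or_add_mem hE ha hb hc hab hac hbc (fun x ↦ ?_)
    fun w hw ↦ ?_)
  · obtain ⟨u, hu, v, hv, huv⟩ := mem_add.mp (hUV.symm ▸ mem_univ (x + p))
    obtain ⟨k, hk, rfl⟩ := mem_image.mp hv
    obtain rfl : u = x + k := by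
      rw [add_comm p, ← add_assoc, add_left_inj] at huv
      exact zmodTwo_add_eq_iff_eq_add.mp huv
    simp only [mem_insert, mem_singleton] at hk
    rcases hk with rfl | rfl | rfl | rfl
    exacts [.inl (by rwa [add_zero] at hu), .inr (.inl hu), .inr (.inr (.inl hu)),
      .inr (.inr (.inr hu))]
  · rcases mem_union.mp (h_sum.symm ▸ mem_univ w) with h | h
    · exact mem_add.mp h
    · obtain ⟨v, hv, v', hv', rfl⟩ := mem_add.mp h
      obtain ⟨k, hk, rfl⟩ := mem_image.mp hv
      obtain ⟨k', hk', rfl⟩ := mem_image.mp hv'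
      refine absurd ?_ hw
      rw [add_add_add_comm, ZModModule.add_self, zero_add]
      exact add_mem (h_span hk) (h_span hk')

end RankFive

section RankSix

variable {E : Type*} [AddCommGroup E] [Module (ZMod 2) E] [Fintype E] [DecidableEq E]

theorem card_ne_thirteen_of_add_self_eq_univ (hE : finrank (ZMod 2) E = 6) {T : Finset E}
    (hT : T + T = univ) : #T ≠ 13 := by
  intro hcard
  obtain ⟨f, hf, e, h_four, h_nine⟩ := exists_card_filter_eq_four_and_nine hE hT hcard
  obtain ⟨x, hx⟩ := DFunLike.ne_iff.mp hf
  replace hx : f x = 1 := Fin.eq_one_of_ne_zero _ hx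
  set N := Submodule.span (ZMod 2) {x}
  have hNx : N.mkQ x = 0 :=
    (Submodule.Quotient.mk_eq_zero N).mpr (Submodule.mem_span_singleton_self x)
  classical
  have : Finite (E ⧸ N) := .of_surjective _ N.mkQ_surjective
  have := Fintype.ofFinite (E ⧸ N)
  have h_finrank : finrank (ZMod 2) (E ⧸ N) = 5 := by
    have h_quot := N.finrank_quotient_add_finrank
    rw [finrank_span_singleton (fun h ↦ by simp [h] at hx), hE] at h_quot
    lia
  have hUV : {t ∈ T | f t = e + 1}.image N.mkQ + {t ∈ T | f t = e}.image N.mkQ = univ := by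
    rw [← image_add, add_comm, eq_univ_iff_forall]
    intro z
    obtain ⟨y, hyz, hy⟩ := exists_map_eq_and_apply_eq N.mkQ_surjective hNx hx z 1
    exact mem_image.mpr ⟨y, filter_eq_one_subset_add hT f e (by simp [hy]), hyz⟩
  have h_sum : ({t ∈ T | f t = e + 1}.image N.mkQ + {t ∈ T | f t = e + 1}.image N.mkQ) ∪
      ({t ∈ T | f t = e}.image N.mkQ + {t ∈ T | f t = e}.image N.mkQ) = univ := by
    rw [← image_add, ← image_add, ← image_union, union_comm, eq_univ_iff_forall]
    intro z
    obtain ⟨y, hyz, hy⟩ := exists_map_eq_and_apply_eq N.mkQ_surjective hNx hx z 0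
    exact mem_image.mpr ⟨y, filter_eq_zero_subset_add hT f e (by simp [hy]), hyz⟩
  have h_ten := ten_le_card_of_add_eq_univ h_finrank (card_image_le.trans_eq h_four) hUV h_sum
  have h_le : #({t ∈ T | f t = e + 1}.image N.mkQ) ≤ 9 := card_image_le.trans_eq h_nine
  lia

theorem fourteen_le_card_of_add_self_eq_univ (hE : finrank (ZMod 2) E = 6) {T : Finset E}
    (hT : T + T = univ) : 14 ≤ #T := by
  by_contra! h_lt
  have h_card : 13 ≤ #(univ : Finset E) := by
    rw [card_univ, card_eq_pow_finrank (K := ZMod 2), hE, ZMod.card]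
    decide
  obtain ⟨T', hTT', -, hT'⟩ := exists_subsuperset_card_eq (subset_univ T) (by lia) h_card
  refine card_ne_thirteen_of_add_self_eq_univ hE (T := T') ?_ hT'
  exact univ_subset_iff.mp (hT ▸ add_subset_add hTT' hTT')

end RankSix

theorem add_self_insert_zero_eq_univ {n : ℕ} {S : Set (Fin n → ZMod 2)} (hS : Saturating S)
    {T : Finset (Fin n → ZMod 2)} (hT : ↑T = S) : insert 0 T + insert 0 T = univ := by
  subst hT
  refine eq_univ_of_forall fun x ↦ ?_
  by_cases hx : x ∈ insert 0 T
  · simpa using add_mem_add hx (mem_insert_self 0 T)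
  · rw [mem_insert, not_or] at hx
    obtain ⟨a, ha, b, hb, -, rfl⟩ := hS.2 x hx.1 hx.2
    exact add_mem_add (mem_insert_of_mem ha) (mem_insert_of_mem hb)

theorem thirteen_le_ncard_of_saturating {S : Set (Fin 6 → ZMod 2)} (hS : Saturating S) :
    13 ≤ S.ncard := by
  obtain ⟨T, rfl⟩ := S.toFinite.exists_finset_coe
  have h_card := fourteen_le_card_of_add_self_eq_univ (by simp)
    (add_self_insert_zero_eq_univ hS rfl)
  rw [Set.ncard_coe_finset]
  have := card_insert_le 0 T
  lia

/-- The cap of `13` points consisting of the six coordinate vectors, the all-ones vector, and the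
six vectors which are all-ones on one of the blocks `{0, 1, 2}`, `{3, 4, 5}` and a coordinate
vector on the other one. -/
def thirteenCap : Finset (Fin 6 → ZMod 2) :=
  {![1, 0, 0, 0, 0, 0], ![0, 1, 0, 0, 0, 0], ![0, 0, 1, 0, 0, 0],
    ![0, 0, 0, 1, 0, 0], ![0, 0, 0, 0, 1, 0], ![0, 0, 0, 0, 0, 1],
    ![1, 1, 1, 1, 1, 1],
    ![1, 0, 0, 1, 1, 1], ![0, 1, 0, 1, 1, 1], ![0, 0, 1, 1, 1, 1],
    ![1, 1, 1, 1, 0, 0], ![1, 1, 1, 0, 1, 0], ![1, 1, 1, 0, 0, 1]}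

theorem card_thirteenCap : #thirteenCap = 13 := by decide +kernel

theorem isCap_thirteenCap : IsCap (thirteenCap : Set (Fin 6 → ZMod 2)) := by
  simp only [IsCap, mem_coe]
  exact ⟨by decide +kernel, by decide +kernel⟩

theorem saturating_thirteenCap : Saturating (thirteenCap : Set (Fin 6 → ZMod 2)) := by
  simp only [Saturating, mem_coe]
  decide +kernel

end

/-- The smallest complete cap in PG(5,2) has size 13, and 13 is also the smallest size
of a 1-saturating set in PG(5,2). -/
theorem completeCap_PG5_min_size :
    (∃ S : Set (Fin 6 → ZMod 2), CompleteCap S ∧ S.ncard = 13) ∧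
      ∀ S : Set (Fin 6 → ZMod 2), Saturating S → 13 ≤ S.ncard := by
  refine ⟨⟨thirteenCap, ⟨isCap_thirteenCap, saturating_thirteenCap⟩, ?_⟩, fun S hS ↦
    thirteen_le_ncard_of_saturating hS⟩
  rw [Set.ncard_coe_finset, card_thirteenCap]
end

section
/- In PG(v,2) with v ≥ 2, a hyperplane together with one point outside it is a minimal 1-saturating set of size 2^v which is not a cap: for any nonzero linear functional f on (ZMod 2)^(v+1) and any vector s with f s = 1, the set { x ≠ 0 : f x = 0 } ∪ {s} is a minimal 1-saturating set of cardinality 2^v, and it is not a cap. -/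
/-!
Let `H` be the hyperplane `f = 0`. Any `x` off `H` other than `s` is `(x + s) + s` with
`x + s ∈ H`, so `H ∪ {s}` is saturating. Conversely, two points of `H ∪ {s}` can only add up to a
vector off `H` if one of them is `s`. Hence a saturating subset contains `s`, since otherwise it
would reach only `H`, and it contains every `h ∈ H`, since `h + s` is a sum of two points only as
`h` plus `s`. A line contained in `H` shows that `H ∪ {s}` is not a cap.
-/

lemma natCard_ker_of_ne_zero {K V : Type*} [Field K] [AddCommGroup V] [Module K V]
    [Module.Finite K V] {f : V →ₗ[K] K} (hf : f ≠ 0) :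
    Nat.card (LinearMap.ker f) = Nat.card K ^ (Module.finrank K V - 1) := by
  rw [Module.natCard_eq_pow_finrank (K := K), ← Module.Dual.finrank_ker_add_one_of_ne_zero hf,
    Nat.add_sub_cancel]

section Module

variable {V : Type*} [AddCommGroup V] [Module (ZMod 2) V] {f : V →ₗ[ZMod 2] ZMod 2}

/-- The hyperplane `f = 0` of the projective space of `V` over `ZMod 2`, as a set of points. As in
`Saturating`, points are nonzero vectors; `f` is allowed to vanish, the result then being the whole
space. -/
def hyperplane (f : V →ₗ[ZMod 2] ZMod 2) : Set V :=
  {x | x ≠ 0 ∧ f x = 0}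

lemma add_mem_hyperplane {x y : V} (hfxy : f x = f y) (hxy : x ≠ y) : x + y ∈ hyperplane f := by
  rw [← ZModModule.sub_eq_add x y]
  exact ⟨sub_ne_zero.mpr hxy, by rw [map_sub, hfxy, sub_self]⟩

lemma notMem_hyperplane {x : V} (hx : f x ≠ 0) : x ∉ hyperplane f :=
  fun h ↦ hx h.2

lemma hyperplane_eq_ker_diff_zero : hyperplane f = (LinearMap.ker f : Set V) \ {0} := by
  ext x
  exact and_comm

lemma ncard_hyperplane_add_one [Module.Finite (ZMod 2) V] (hf : f ≠ 0) :
    (hyperplane f).ncard + 1 = 2 ^ (Module.finrank (ZMod 2) V - 1) := by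
  have : Finite V := Module.finite_of_finite (ZMod 2)
  calc (hyperplane f).ncard + 1
    _ = (LinearMap.ker f : Set V).ncard := by
      rw [hyperplane_eq_ker_diff_zero,
        Set.ncard_sdiff_singleton_add_one (zero_mem (LinearMap.ker f))]
    _ = 2 ^ (Module.finrank (ZMod 2) V - 1) := by
      rw [← Nat.card_coe_set_eq]
      exact (natCard_ker_of_ne_zero hf).trans (by rw [Nat.card_zmod])

lemma eq_or_eq_of_mem_insert_hyperplane {s h a b : V} (hs : f s = 1) (hh : f h = 0)
    (ha : a ∈ insert s (hyperplane f)) (hb : b ∈ insert s (hyperplane f)) (hab : h + s = a + b) :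
    a = h ∨ b = h := by
  rcases ha with rfl | ⟨-, ha⟩
  · exact .inr (add_left_cancel (hab.symm.trans (add_comm h a)))
  rcases hb with rfl | ⟨-, hb⟩
  · exact .inl (add_right_cancel hab).symm
  · have hfab : f (h + s) = f (a + b) := congrArg f hab
    simp [hs, hh, ha, hb] at hfab

end Module

section PG

variable {n : ℕ} {S : Set (Fin n → ZMod 2)} {f : (Fin n → ZMod 2) →ₗ[ZMod 2] ZMod 2}
  {s : Fin n → ZMod 2}

lemma saturating_insert_hyperplane (hs : f s = 1) : Saturating (insert s (hyperplane f)) := by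
  have hs0 : s ≠ 0 := by
    rintro rfl
    simp at hs
  refine ⟨Set.forall_mem_insert.mpr ⟨hs0, fun _ hx ↦ hx.1⟩, fun x hx0 hx ↦ ?_⟩
  have hxs : x ≠ s := fun h ↦ hx (.inl h)
  have hfx : f x = 1 := Fin.eq_one_of_ne_zero _ fun h ↦ hx (.inr ⟨hx0, h⟩)
  refine ⟨x + s, .inr (add_mem_hyperplane (hfx.trans hs.symm) hxs), s, .inl rfl, ?_, ?_⟩
  · rwa [Ne, add_eq_right]
  · rw [add_assoc, ZModModule.add_self, add_zero]

lemma Saturating.not_subset_hyperplane (hS : Saturating S) (hf : f ≠ 0) : ¬ S ⊆ hyperplane f := by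
  intro hSf
  obtain ⟨x, hx⟩ : ∃ x, f x ≠ 0 := DFunLike.ne_iff.mp hf
  have hx0 : x ≠ 0 := by
    rintro rfl
    exact hx (map_zero f)
  obtain ⟨a, ha, b, hb, -, rfl⟩ := hS.2 x hx0 fun h ↦ hx (hSf h).2
  exact hx (by rw [map_add, (hSf ha).2, (hSf hb).2, add_zero])

lemma Saturating.hyperplane_subset (hS : Saturating S) (hs : f s = 1)
    (hSf : S ⊆ insert s (hyperplane f)) : hyperplane f ⊆ S := by
  rintro h ⟨hh0, hh⟩
  have hfhs : f (h + s) ≠ 0 := by simp [hh, hs]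
  have hhs0 : h + s ≠ 0 := by
    intro h0
    exact hfhs (by rw [h0, map_zero])
  have hhsS : h + s ∉ S := fun hmem ↦
    (hSf hmem).elim (fun heq ↦ hh0 (add_eq_right.mp heq)) (notMem_hyperplane hfhs)
  obtain ⟨a, ha, b, hb, -, hab⟩ := hS.2 (h + s) hhs0 hhsS
  rcases eq_or_eq_of_mem_insert_hyperplane hs hh (hSf ha) (hSf hb) hab with rfl | rfl
  exacts [ha, hb]

lemma Saturating.eq_insert_hyperplane (hS : Saturating S) (hs : f s = 1)
    (hSf : S ⊆ insert s (hyperplane f)) : S = insert s (hyperplane f) := by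
  have hf : f ≠ 0 := by
    rintro rfl
    simp at hs
  have hsS : s ∈ S := by
    by_contra hsS
    exact hS.not_subset_hyperplane hf ((Set.subset_insert_iff_of_notMem hsS).mp hSf)
  exact hSf.antisymm (Set.insert_subset hsS (hS.hyperplane_subset hs hSf))

lemma minSat_insert_hyperplane (hs : f s = 1) : MinSat (insert s (hyperplane f)) := by
  refine ⟨saturating_insert_hyperplane hs, fun t ht hT ↦ ?_⟩
  rw [← hT.eq_insert_hyperplane hs Set.sdiff_subset] at ht
  exact ht.2 rfl

lemma IsCap.add_notMem (hS : IsCap S) {a b : Fin n → ZMod 2} (ha : a ∈ S) (hb : b ∈ S)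
    (hab : a ≠ b) : a + b ∉ S := fun hmem ↦
  hS.2 a ha b hb (a + b) hmem hab (by simpa using hS.1 b hb) (by simpa using hS.1 a ha)
    (ZModModule.add_self _)

lemma not_isCap_of_hyperplane_subset (hH : (hyperplane f).Nontrivial) (hfS : hyperplane f ⊆ S) :
    ¬ IsCap S := by
  obtain ⟨a, ha, b, hb, hab⟩ := hH
  exact fun hS ↦ hS.add_notMem (hfS ha) (hfS hb) hab
    (hfS (add_mem_hyperplane (ha.2.trans hb.2.symm) hab))

end PG

/-- In PG(v,2), v ≥ 2, a hyperplane together with one point outside it is a minimal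
1-saturating set of size 2^v which is not a cap. -/
theorem hyperplane_plus_point_minSat (v : ℕ) (hv : 2 ≤ v)
    (f : (Fin (v + 1) → ZMod 2) →ₗ[ZMod 2] ZMod 2) (hf : f ≠ 0)
    (s : Fin (v + 1) → ZMod 2) (hs : f s = 1) :
    MinSat ({x : Fin (v + 1) → ZMod 2 | x ≠ 0 ∧ f x = 0} ∪ {s}) ∧
    ({x : Fin (v + 1) → ZMod 2 | x ≠ 0 ∧ f x = 0} ∪ {s}).ncard = 2 ^ v ∧
    ¬ IsCap ({x : Fin (v + 1) → ZMod 2 | x ≠ 0 ∧ f x = 0} ∪ {s}) := by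
  have hcard : (hyperplane f).ncard + 1 = 2 ^ v := by
    simpa using ncard_hyperplane_add_one hf
  have hnontrivial : (hyperplane f).Nontrivial := by
    have : 2 ^ 2 ≤ 2 ^ v := Nat.pow_le_pow_right two_pos hv
    exact Set.one_lt_ncard_iff_nontrivial.mp (by lia)
  have hsH : s ∉ hyperplane f := notMem_hyperplane (by simp [hs])
  rw [Set.union_singleton]
  exact ⟨minSat_insert_hyperplane hs, (Set.ncard_insert_of_notMem hsH).trans hcard,
    not_isCap_of_hyperplane_subset hnontrivial (Set.subset_insert _ _)⟩
end

section
/- Every minimal 1-saturating set in PG(v,2) has size at most 2^v: if S is a minimal 1-saturating set of nonzero vectors of (ZMod 2)^(v+1) with v ≥ 2, then the cardinality of S is at most 2^v. -/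
/-!
If `T` is a set of nonzero vectors with `2 * (T.ncard + 1) > 2 ^ n`, then `T ∪ {0}` fills more than
half of the group, so by the pigeonhole principle every `x` is a sum of two of its elements. For
`x ∉ T ∪ {0}` neither summand can be `0`, and the two differ because `a + a = 0`. Hence a saturating
set with more than `2 ^ (n - 1)` elements survives the removal of any one of them.
-/

open scoped Pointwise in
@[to_additive]
theorem mul_eq_univ_of_card_lt_ncard_add_ncard {G : Type*} [Group G] [Finite G] {A B : Set G}
    (h : Nat.card G < A.ncard + B.ncard) : A * B = Set.univ := by
  refine Set.eq_univ_of_forall fun x ↦ ?_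
  have hmeet : (A ∩ x • B⁻¹).Nonempty :=
    Set.nonempty_inter_of_lt_ncard_add_ncard (by rwa [Set.ncard_smul_set, Set.ncard_inv])
  obtain ⟨a, haA, ha⟩ := hmeet
  refine Set.mem_mul.mpr ⟨a, haA, a⁻¹ * x, ?_, mul_inv_cancel_left a x⟩
  simpa [Set.mem_smul_set_iff_inv_smul_mem] using ha

open scoped Pointwise in
theorem saturating_of_two_pow_lt_two_mul_ncard_add_one {n : ℕ} {T : Set (Fin n → ZMod 2)}
    (hT : ∀ t ∈ T, t ≠ 0) (hcard : 2 ^ n < 2 * (T.ncard + 1)) : Saturating T := by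
  refine ⟨hT, fun x hx hxT ↦ ?_⟩
  have hT0 : (insert 0 T).ncard = T.ncard + 1 := Set.ncard_insert_of_notMem fun h ↦ hT 0 h rfl
  have huniv : (insert 0 T + insert 0 T : Set (Fin n → ZMod 2)) = Set.univ :=
    add_eq_univ_of_card_lt_ncard_add_ncard (by simpa [hT0, two_mul] using hcard)
  obtain ⟨a, ha, b, hb, rfl⟩ := Set.mem_add.mp (huniv ▸ Set.mem_univ x)
  rcases ha with rfl | ha <;> rcases hb with rfl | hb
  · exact absurd (add_zero 0) hx
  · exact absurd (by simpa using hb) hxT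
  · exact absurd (by simpa using ha) hxT
  · exact ⟨a, ha, b, hb, fun hab ↦ hx (hab ▸ ZModModule.add_self a), rfl⟩

/-- Every minimal 1-saturating set in PG(v,2), v ≥ 2, has size at most 2^v. -/
theorem minSat_card_le (v : ℕ) (hv : 2 ≤ v) (S : Set (Fin (v + 1) → ZMod 2))
    (hS : MinSat S) : S.ncard ≤ 2 ^ v := by
  by_contra! hlt
  obtain ⟨⟨hne, -⟩, hmin⟩ := hS
  obtain ⟨s, hs⟩ : S.Nonempty := Set.nonempty_of_ncard_ne_zero (Nat.ne_zero_of_lt hlt)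
  refine hmin s hs (saturating_of_two_pow_lt_two_mul_ncard_add_one (fun t ht ↦ hne t ht.1) ?_)
  rw [Set.ncard_sdiff_singleton_add_one hs, pow_succ']
  exact Nat.mul_lt_mul_of_pos_left hlt two_pos
end
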